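/- arXiv:1002.2925 — 7 statements merged into one kernel-verified Lean document; each statement's English description precedes it below -/
import Mathlib

section
/- Suppose there exists a twice differentiable function φ : [0,L] → ℝ with φ(x) > 0 on [0,L], Lφ(x) > 0 on [0,L], and Dφ > 0. Then the maximum principle holds for L: for every twice differentiable function ψ : [0,L] → ℝ satisfying Lψ(x) ≥ 0 on [0,L], Dψ ≥ 0, and ψ(0) ≥ 0, one has ψ(x) ≥ 0 for all x ∈ [0,L]. -/
open Set

/-!
If `ψ` were negative somewhere, let `-k < 0` be the minimum of `ψ / φ`. Then `w = ψ + k φ` is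
nonnegative and vanishes at a minimum point `x`, while it satisfies all the hypotheses on `ψ` with
strict inequalities. Hence `x` is not the left endpoint. If `x` is interior, then
`w x = w' x = 0 ≤ w'' x`, against `0 < L w x`. If `x` is the right endpoint, then `w x = 0` and
`w' x ≤ 0`, against `0 < D w`.
-/

open Topology

/-- The second order linear differential operator `u ↦ -p u'' + q u' + r u`, with coefficients
depending on the point. -/
noncomputable def secondOrderOp (p q r u : ℝ → ℝ) (x : ℝ) : ℝ :=
  -p x * deriv (deriv u) x + q x * deriv u x + r x * u x

theorem secondOrderOp_add_smul {p q r u v : ℝ → ℝ} {x : ℝ} (k : ℝ)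
    (hu : ∀ᶠ y in 𝓝 x, DifferentiableAt ℝ u y) (hu' : DifferentiableAt ℝ (deriv u) x)
    (hv : ∀ᶠ y in 𝓝 x, DifferentiableAt ℝ v y) (hv' : DifferentiableAt ℝ (deriv v) x) :
    secondOrderOp p q r (u + k • v) x = secondOrderOp p q r u x + k * secondOrderOp p q r v x := by
  have hderiv : deriv (u + k • v) =ᶠ[𝓝 x] deriv u + k • deriv v := by
    filter_upwards [hu, hv] with y huy hvy
    rw [deriv_add huy (hvy.const_smul k), deriv_const_smul k hvy]
    rfl
  have hderiv₂ : deriv (deriv (u + k • v)) x = deriv (deriv u) x + k * deriv (deriv v) x := by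
    rw [hderiv.deriv_eq, deriv_add hu' (hv'.const_smul k), deriv_const_smul k hv', smul_eq_mul]
  simp only [secondOrderOp, hderiv₂, hderiv.self_of_nhds, Pi.add_apply, Pi.smul_apply, smul_eq_mul]
  ring

theorem deriv_deriv_nonneg_of_isLocalMin {f : ℝ → ℝ} {x : ℝ} (hmin : IsLocalMin f x)
    (hf : ContinuousAt f x) : 0 ≤ deriv (deriv f) x := by
  by_contra! hneg
  have hmax : IsLocalMax f x := isLocalMax_of_deriv_deriv_neg hneg hmin.deriv_eq_zero hf
  have hconst : f =ᶠ[𝓝 x] fun _ ↦ f x := by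
    filter_upwards [hmin, hmax] with y hle hge using le_antisymm hge hle
  have hzero : deriv (deriv f) x = 0 := by
    simp only [hconst.deriv.deriv_eq, deriv_const']
  exact hneg.ne hzero

theorem secondOrderOp_nonpos_of_isLocalMin {p q r u : ℝ → ℝ} {x : ℝ} (hp : 0 ≤ p x)
    (hmin : IsLocalMin u x) (hu : ContinuousAt u x) (hux : u x = 0) :
    secondOrderOp p q r u x ≤ 0 := by
  have hu'' : 0 ≤ p x * deriv (deriv u) x :=
    mul_nonneg hp (deriv_deriv_nonneg_of_isLocalMin hmin hu)
  simpa only [secondOrderOp, hmin.deriv_eq_zero, hux, mul_zero, add_zero, neg_mul, neg_nonpos]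

theorem hasDerivWithinAt_nonpos_of_isMinOn_right {f : ℝ → ℝ} {f' a b : ℝ} (hab : a < b)
    (hmin : IsMinOn f (Icc a b) b) (hf : HasDerivWithinAt f f' (Icc a b) b) : f' ≤ 0 := by
  have hcone : a - b ∈ posTangentConeAt (Icc a b) b :=
    sub_mem_posTangentConeAt_of_segment_subset (by rw [segment_symm, segment_eq_Icc hab.le])
  have hnonneg : 0 ≤ (a - b) * f' := by
    simpa using hmin.localize.hasFDerivWithinAt_nonneg hf.hasFDerivWithinAt hcone
  exact nonpos_of_mul_nonneg_right hnonneg (sub_neg.2 hab)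

theorem exists_pos_isMinOn_add_smul_eq_zero {X : Type*} [TopologicalSpace X] {s : Set X}
    {φ ψ : X → ℝ} (hs : IsCompact s) (hφ : ContinuousOn φ s) (hψ : ContinuousOn ψ s)
    (hφpos : ∀ x ∈ s, 0 < φ x) (hψneg : ∃ x ∈ s, ψ x < 0) :
    ∃ k : ℝ, 0 < k ∧ ∃ x ∈ s, IsMinOn (ψ + k • φ) s x ∧ (ψ + k • φ) x = 0 := by
  obtain ⟨y, hy, hψy⟩ := hψneg
  obtain ⟨x, hx, hmin⟩ := hs.exists_isMinOn ⟨y, hy⟩ (hψ.div hφ fun z hz ↦ (hφpos z hz).ne')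
  have hquot : ∀ z ∈ s, ψ x / φ x ≤ ψ z / φ z := hmin
  have hneg : ψ x / φ x < 0 := (hquot y hy).trans_lt (div_neg_of_neg_of_pos hψy (hφpos y hy))
  have hzero : (ψ + (-(ψ x / φ x)) • φ) x = 0 := by
    simp [div_mul_cancel₀ _ (hφpos x hx).ne']
  refine ⟨-(ψ x / φ x), neg_pos.2 hneg, x, hx, isMinOn_iff.2 fun z hz ↦ ?_, hzero⟩
  have hle : ψ x / φ x * φ z ≤ ψ z := (le_div_iff₀ (hφpos z hz)).1 (hquot z hz)
  rw [hzero]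
  simpa using hle

theorem statement0_general {a b η d φ' ψ' : ℝ} {p q r φ ψ : ℝ → ℝ}
    (hp : ∀ x ∈ Ioo a b, 0 ≤ p x) (hη : 0 ≤ η)
    (hφ : DifferentiableOn ℝ φ (Icc a b))
    (hφdiff2 : ∀ x ∈ Ioo a b, DifferentiableAt ℝ (deriv φ) x)
    (hφ' : HasDerivWithinAt φ φ' (Icc a b) b)
    (hφpos : ∀ x ∈ Icc a b, 0 < φ x)
    (hLφ : ∀ x ∈ Ioo a b, 0 < secondOrderOp p q r φ x)
    (hDφ : 0 < η * φ' + d * φ b)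
    (hψ : DifferentiableOn ℝ ψ (Icc a b))
    (hψdiff2 : ∀ x ∈ Ioo a b, DifferentiableAt ℝ (deriv ψ) x)
    (hψ' : HasDerivWithinAt ψ ψ' (Icc a b) b)
    (hLψ : ∀ x ∈ Ioo a b, 0 ≤ secondOrderOp p q r ψ x)
    (hDψ : 0 ≤ η * ψ' + d * ψ b) (hψa : 0 ≤ ψ a) :
    ∀ x ∈ Icc a b, 0 ≤ ψ x := by
  by_contra! hneg
  obtain ⟨k, hk, x, hx, hmin, hzero⟩ :=
    exists_pos_isMinOn_add_smul_eq_zero isCompact_Icc hφ.continuousOn hψ.continuousOn hφpos hneg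
  have hwx : ψ x + k * φ x = 0 := hzero
  have hax : a < x := by
    refine hx.1.lt_of_ne ?_
    rintro rfl
    linarith [mul_pos hk (hφpos a hx)]
  rcases hx.2.lt_or_eq with hxb | rfl
  · have hxI : x ∈ Ioo a b := ⟨hax, hxb⟩
    have hIcc : Icc a b ∈ 𝓝 x := Icc_mem_nhds hax hxb
    have hLw_nonpos : secondOrderOp p q r (ψ + k • φ) x ≤ 0 :=
      secondOrderOp_nonpos_of_isLocalMin (hp x hxI) (hmin.isLocalMin hIcc)
        ((hψ.add (hφ.const_smul k)).continuousOn.continuousAt hIcc) hzero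
    rw [secondOrderOp_add_smul k (hψ.eventually_differentiableAt hIcc) (hψdiff2 x hxI)
      (hφ.eventually_differentiableAt hIcc) (hφdiff2 x hxI)] at hLw_nonpos
    linarith [hLψ x hxI, mul_pos hk (hLφ x hxI)]
  · have hw'_nonpos : ψ' + k * φ' ≤ 0 :=
      hasDerivWithinAt_nonpos_of_isMinOn_right hax hmin (hψ'.add (hφ'.const_smul k))
    have hDw_nonpos : η * (ψ' + k * φ') + d * (ψ x + k * φ x) ≤ 0 := by
      rw [hwx, mul_zero, add_zero]
      exact mul_nonpos_of_nonneg_of_nonpos hη hw'_nonpos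
    linarith [mul_pos hk hDφ]

/-- Maximum principle for the operator `L u x = -ε u'' x + a x * u' x + c x * u x`
with boundary functional `D u = ε u' L + d * u L`, given a positive barrier
function `φ` with `L φ > 0` on `[0, L]` and `D φ > 0`. -/
theorem statement0 (L ε d : ℝ) (hL : 0 < L) (hε : 0 < ε)
    (a c : ℝ → ℝ)
    (ha : ContinuousOn a (Icc 0 L)) (hc : ContinuousOn c (Icc 0 L))
    (φ : ℝ → ℝ)
    (hφdiff : ∀ x ∈ Icc 0 L, DifferentiableAt ℝ φ x)
    (hφdiff2 : ∀ x ∈ Icc 0 L, DifferentiableAt ℝ (deriv φ) x)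
    (hφpos : ∀ x ∈ Icc 0 L, 0 < φ x)
    (hLφ : ∀ x ∈ Icc 0 L,
      0 < -ε * deriv (deriv φ) x + a x * deriv φ x + c x * φ x)
    (hDφ : 0 < ε * deriv φ L + d * φ L) :
    ∀ ψ : ℝ → ℝ,
      (∀ x ∈ Icc 0 L, DifferentiableAt ℝ ψ x) →
      (∀ x ∈ Icc 0 L, DifferentiableAt ℝ (deriv ψ) x) →
      (∀ x ∈ Icc 0 L,
        0 ≤ -ε * deriv (deriv ψ) x + a x * deriv ψ x + c x * ψ x) →
      0 ≤ ε * deriv ψ L + d * ψ L →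
      0 ≤ ψ 0 →
      ∀ x ∈ Icc 0 L, 0 ≤ ψ x := fun _ hψdiff hψdiff2 hLψ hDψ hψ0 ↦
  have hL' : L ∈ Icc 0 L := right_mem_Icc.2 hL.le
  have hsub : Ioo 0 L ⊆ Icc 0 L := Ioo_subset_Icc_self
  statement0_general (p := fun _ ↦ ε) (q := a) (r := c) (fun _ _ ↦ hε.le) hε.le
    (fun x hx ↦ (hφdiff x hx).differentiableWithinAt) (fun x hx ↦ hφdiff2 x (hsub hx))
    (hφdiff L hL').hasDerivAt.hasDerivWithinAt hφpos (fun x hx ↦ hLφ x (hsub hx)) hDφ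
    (fun x hx ↦ (hψdiff x hx).differentiableWithinAt) (fun x hx ↦ hψdiff2 x (hsub hx))
    (hψdiff L hL').hasDerivAt.hasDerivWithinAt (fun x hx ↦ hLψ x (hsub hx)) hDψ hψ0
end

section
/- If u : [0,L] → ℝ is a twice differentiable solution of the boundary value problem T_ε u = 0 on [0,L], u(0) = A, R_ε u = 0, then there exists a constant C > 0, depending only on α, β, γ, and L (independent of ε), such that sup_{x∈[0,L]} |u(x)| ≤ C (|A| + |g(0)| + |f(0)|). -/
open Set

/-!
The bound is a maximum principle for `v ↦ -ε v'' + a v' - β v`, whose zeroth-order coefficient has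
the wrong sign. A strictly positive strict supersolution `φ` repairs this: if `v` were positive
somewhere, the smallest multiple of `φ` lying above `v` would touch it at a point that is excluded
by the differential inequality in the interior and by the Neumann condition at the right end.

For `α ≤ a`, the operator maps an increasing exponential of rate `k` to at least
`α k - ε k² - β` times itself. The discriminant condition makes this rate residual positive
uniformly in `ε` for `k = 2 β / α`, the source of an `ε`-independent supersolution that absorbs `A`
and `g 0`, and nonnegative for the boundary layer rate `α / (2 ε)`, which produces an outflow
derivative of order `1 / ε` and absorbs `f 0`.

Where `u > 0`, the one-sided bounds on `g` and `f` turn the nonlinear problem into the linear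
inequality; the same applies to `-u`.
-/

open scoped Topology

open Real (exp)

section SecondDerivative

/-- `v'` and `v''` are the first and second derivatives of `v` on `[l, r]`. At the end points only
the one-sided first derivative is required, and no second derivative. -/
structure HasSecondDerivOnIcc (l r : ℝ) (v v' v'' : ℝ → ℝ) : Prop where
  hasDerivWithinAt : ∀ x ∈ Icc l r, HasDerivWithinAt v (v' x) (Icc l r) x
  hasDerivAt_deriv : ∀ x ∈ Ioo l r, HasDerivAt v' (v'' x) x

namespace HasSecondDerivOnIcc

variable {l r : ℝ} {v v' v'' w w' w'' : ℝ → ℝ}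

theorem of_differentiableAt (hv : ∀ x ∈ Icc l r, DifferentiableAt ℝ v x)
    (hv' : ∀ x ∈ Icc l r, DifferentiableAt ℝ (deriv v) x) :
    HasSecondDerivOnIcc l r v (deriv v) (deriv (deriv v)) where
  hasDerivWithinAt x hx := (hv x hx).hasDerivAt.hasDerivWithinAt
  hasDerivAt_deriv x hx := (hv' x (Ioo_subset_Icc_self hx)).hasDerivAt

theorem continuousOn (hv : HasSecondDerivOnIcc l r v v' v'') : ContinuousOn v (Icc l r) :=
  fun x hx => (hv.hasDerivWithinAt x hx).continuousWithinAt

theorem hasDerivAt (hv : HasSecondDerivOnIcc l r v v' v'') {x : ℝ} (hx : x ∈ Ioo l r) :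
    HasDerivAt v (v' x) x :=
  (hv.hasDerivWithinAt x (Ioo_subset_Icc_self hx)).hasDerivAt (Icc_mem_nhds hx.1 hx.2)

theorem neg (hv : HasSecondDerivOnIcc l r v v' v'') :
    HasSecondDerivOnIcc l r (fun x => -v x) (fun x => -v' x) (fun x => -v'' x) where
  hasDerivWithinAt x hx := (hv.hasDerivWithinAt x hx).fun_neg
  hasDerivAt_deriv x hx := (hv.hasDerivAt_deriv x hx).fun_neg

theorem add (hv : HasSecondDerivOnIcc l r v v' v'') (hw : HasSecondDerivOnIcc l r w w' w'') :
    HasSecondDerivOnIcc l r (fun x => v x + w x) (fun x => v' x + w' x)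
      (fun x => v'' x + w'' x) where
  hasDerivWithinAt x hx := (hv.hasDerivWithinAt x hx).fun_add (hw.hasDerivWithinAt x hx)
  hasDerivAt_deriv x hx := (hv.hasDerivAt_deriv x hx).fun_add (hw.hasDerivAt_deriv x hx)

theorem sub (hv : HasSecondDerivOnIcc l r v v' v'') (hw : HasSecondDerivOnIcc l r w w' w'') :
    HasSecondDerivOnIcc l r (fun x => v x - w x) (fun x => v' x - w' x)
      (fun x => v'' x - w'' x) where
  hasDerivWithinAt x hx := (hv.hasDerivWithinAt x hx).fun_sub (hw.hasDerivWithinAt x hx)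
  hasDerivAt_deriv x hx := (hv.hasDerivAt_deriv x hx).fun_sub (hw.hasDerivAt_deriv x hx)

theorem const_mul (c : ℝ) (hv : HasSecondDerivOnIcc l r v v' v'') :
    HasSecondDerivOnIcc l r (fun x => c * v x) (fun x => c * v' x) (fun x => c * v'' x) where
  hasDerivWithinAt x hx := (hv.hasDerivWithinAt x hx).const_mul c
  hasDerivAt_deriv x hx := (hv.hasDerivAt_deriv x hx).const_mul c

theorem exp_mul_sub (l r k s : ℝ) :
    HasSecondDerivOnIcc l r (fun x => exp (k * (x - s))) (fun x => k * exp (k * (x - s)))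
      (fun x => k ^ 2 * exp (k * (x - s))) := by
  have hexp (x : ℝ) : HasDerivAt (fun x => exp (k * (x - s))) (k * exp (k * (x - s))) x := by
    simpa [mul_comm] using (((hasDerivAt_id x).sub_const s).const_mul k).exp
  refine ⟨fun x _ => (hexp x).hasDerivWithinAt, fun x _ => ?_⟩
  simpa only [sq, mul_assoc] using (hexp x).const_mul k

end HasSecondDerivOnIcc

end SecondDerivative

section MaximumPrinciple

theorem second_deriv_nonpos_of_isLocalMax {v v' : ℝ → ℝ} {v'' x : ℝ} (hmax : IsLocalMax v x)
    (hv : ∀ᶠ y in 𝓝 x, HasDerivAt v (v' y) y) (hv' : HasDerivAt v' v'' x) : v'' ≤ 0 := by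
  have hderiv : deriv (deriv v) x = v'' :=
    (Filter.EventuallyEq.deriv_eq (hv.mono fun _ h => h.deriv)).trans hv'.deriv
  by_contra! hpos
  -- By the second derivative test `x` is also a local minimum, so `v` is locally constant.
  have hmin : IsLocalMin v x :=
    isLocalMin_of_deriv_deriv_pos (hderiv ▸ hpos) hmax.deriv_eq_zero hv.self_of_nhds.continuousAt
  have hconst : v =ᶠ[𝓝 x] fun _ => v x := by
    filter_upwards [hmax, hmin] with y hle hge using le_antisymm hle hge
  have hzero : deriv (deriv v) x = 0 := by simpa using hconst.deriv.deriv_eq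
  exact hpos.ne' (hderiv.symm.trans hzero)

theorem deriv_nonneg_of_isMaxOn_Icc_right {v : ℝ → ℝ} {l r v' : ℝ} (hlr : l < r)
    (hmax : IsMaxOn v (Icc l r) r) (hv : HasDerivWithinAt v v' (Icc l r) r) : 0 ≤ v' := by
  have hcone : l - r ∈ posTangentConeAt (Icc l r) r :=
    sub_mem_posTangentConeAt_of_segment_subset (by rw [segment_symm, segment_eq_Icc hlr.le])
  have hdir : (l - r) * v' ≤ 0 := by
    simpa using hmax.localize.hasFDerivWithinAt_nonpos hv.hasFDerivWithinAt hcone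
  exact nonneg_of_mul_nonpos_right hdir (sub_neg.2 hlr)

theorem exists_pos_isMaxOn_sub_mul {X : Type*} [TopologicalSpace X] {K : Set X} (hK : IsCompact K)
    {v φ : X → ℝ} (hv : ContinuousOn v K) (hφ : ContinuousOn φ K) (hφ_pos : ∀ x ∈ K, 0 < φ x)
    {x : X} (hx : x ∈ K) (hvx : 0 < v x) :
    ∃ M > 0, ∃ z ∈ K, v z = M * φ z ∧ IsMaxOn (fun y => v y - M * φ y) K z := by
  obtain ⟨z, hz, hmax⟩ :=
    hK.exists_isMaxOn ⟨x, hx⟩ (hv.div hφ fun y hy => (hφ_pos y hy).ne')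
  have hcontact : v z = v z / φ z * φ z := (div_mul_cancel₀ _ (hφ_pos z hz).ne').symm
  refine ⟨v z / φ z, (div_pos hvx (hφ_pos x hx)).trans_le (hmax hx), z, hz, hcontact, ?_⟩
  intro y hy
  have hle : v y ≤ v z / φ z * φ y := (div_le_iff₀ (hφ_pos y hy)).1 (hmax hy)
  change v y - v z / φ z * φ y ≤ v z - v z / φ z * φ z
  linarith

theorem nonpos_of_pos_supersolution {l r : ℝ} {p a c v v' v'' φ φ' φ'' : ℝ → ℝ}
    (hp : ∀ x ∈ Ioo l r, 0 ≤ p x)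
    (hφ : HasSecondDerivOnIcc l r φ φ' φ'') (hφ_pos : ∀ x ∈ Icc l r, 0 < φ x)
    (hφ_super : ∀ x ∈ Ioo l r, 0 < -p x * φ'' x + a x * φ' x + c x * φ x) (hφ_right : 0 < φ' r)
    (hv : HasSecondDerivOnIcc l r v v' v'')
    (hv_sub : ∀ x ∈ Ioo l r, 0 < v x → -p x * v'' x + a x * v' x + c x * v x ≤ 0)
    (hv_left : v l ≤ 0) (hv_right : 0 < v r → v' r ≤ 0) :
    ∀ x ∈ Icc l r, v x ≤ 0 := by
  intro x hx
  by_contra! hvx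
  obtain ⟨M, hM, z, hz, hcontact, hmax⟩ :=
    exists_pos_isMaxOn_sub_mul isCompact_Icc hv.continuousOn hφ.continuousOn hφ_pos hx hvx
  have hvz : 0 < v z := hcontact ▸ mul_pos hM (hφ_pos z hz)
  have hw := hv.sub (hφ.const_mul M)
  have hlz : l < z := hz.1.lt_of_ne fun h => (h ▸ hv_left).not_gt hvz
  rcases hz.2.eq_or_lt with rfl | hzr
  · have hslope : 0 ≤ v' z - M * φ' z :=
      deriv_nonneg_of_isMaxOn_Icc_right hlz hmax (hw.hasDerivWithinAt z hz)
    linarith [hv_right hvz, mul_pos hM hφ_right]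
  · have hz' : z ∈ Ioo l r := ⟨hlz, hzr⟩
    have hlocal := hmax.isLocalMax (Icc_mem_nhds hlz hzr)
    have hfirst : v' z - M * φ' z = 0 := hlocal.hasDerivAt_eq_zero (hw.hasDerivAt hz')
    have hsecond : v'' z - M * φ'' z ≤ 0 :=
      second_deriv_nonpos_of_isLocalMax hlocal
        (Filter.eventually_of_mem (Ioo_mem_nhds hlz hzr) fun _ => hw.hasDerivAt)
        (hw.hasDerivAt_deriv z hz')
    have hsuper : 0 < M * (-p z * φ'' z + a z * φ' z + c z * φ z) :=
      mul_pos hM (hφ_super z hz')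
    have hsub := hv_sub z hz' hvz
    rw [sub_eq_zero.1 hfirst, hcontact] at hsub
    linarith [mul_nonpos_of_nonneg_of_nonpos (hp z hz') hsecond]

theorem le_of_pos_supersolution {l r : ℝ} {p a c u u' u'' w w' w'' φ φ' φ'' : ℝ → ℝ}
    (hp : ∀ x ∈ Ioo l r, 0 ≤ p x)
    (hφ : HasSecondDerivOnIcc l r φ φ' φ'') (hφ_pos : ∀ x ∈ Icc l r, 0 < φ x)
    (hφ_super : ∀ x ∈ Ioo l r, 0 < -p x * φ'' x + a x * φ' x + c x * φ x) (hφ_right : 0 < φ' r)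
    (hu : HasSecondDerivOnIcc l r u u' u'') (hw : HasSecondDerivOnIcc l r w w' w'')
    (hw_nonneg : ∀ x ∈ Icc l r, 0 ≤ w x)
    (huw : ∀ x ∈ Ioo l r, 0 < u x →
      -p x * u'' x + a x * u' x + c x * u x ≤ -p x * w'' x + a x * w' x + c x * w x)
    (huw_left : u l ≤ w l) (huw_right : 0 < u r → u' r ≤ w' r) :
    ∀ x ∈ Icc l r, u x ≤ w x := by
  intro x hx
  have hpos {y : ℝ} (hy : y ∈ Icc l r) (huwy : 0 < u y - w y) : 0 < u y :=
    (hw_nonneg y hy).trans_lt (sub_pos.1 huwy)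
  refine sub_nonpos.1 (nonpos_of_pos_supersolution hp hφ hφ_pos hφ_super hφ_right
    (hu.sub hw) (fun y hy huwy => ?_) (sub_nonpos.2 huw_left) (fun huwr => ?_) x hx)
  · linarith [huw y hy (hpos (Ioo_subset_Icc_self hy) huwy)]
  · exact sub_nonpos.2 (huw_right (hpos (right_mem_Icc.2 (hx.1.trans hx.2)) huwr))

end MaximumPrinciple

section LinearBound

/-- The factor `α k - ε k² - β` by which `w ↦ -ε w'' + α w' - β w` multiplies an exponential of
rate `k`. -/
def rateResidual (α β ε k : ℝ) : ℝ := α * k - ε * k ^ 2 - β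

variable {α β γ ε : ℝ}

theorem rateResidual_mul_le {k a E : ℝ} (hk : 0 ≤ k) (ha : α ≤ a) (hE : 0 ≤ E) :
    rateResidual α β ε k * E ≤ -ε * (k ^ 2 * E) + a * (k * E) + -β * E := by
  unfold rateResidual
  linarith [mul_le_mul_of_nonneg_right ha (mul_nonneg hk hE)]

theorem le_rateResidual_two_mul_div (hα : 0 < α) (hβ : 0 ≤ β) (hγε : γ ≤ α ^ 2 - 4 * ε * β) :
    β * γ / α ^ 2 ≤ rateResidual α β ε (2 * β / α) := by
  calc β * γ / α ^ 2 ≤ β * (α ^ 2 - 4 * ε * β) / α ^ 2 := by gcongr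
    _ = rateResidual α β ε (2 * β / α) := by unfold rateResidual; field_simp; ring

theorem rateResidual_div_two_mul_nonneg (hε : 0 < ε) (hdisc : 0 ≤ α ^ 2 - 4 * ε * β) :
    0 ≤ rateResidual α β ε (α / (2 * ε)) := by
  calc 0 ≤ (α ^ 2 - 4 * ε * β) / (4 * ε) := by positivity
    _ = rateResidual α β ε (α / (2 * ε)) := by unfold rateResidual; field_simp; ring

theorem le_exp_add_exp_of_subsolution {l r k m K N : ℝ} {a u u' u'' : ℝ → ℝ} (hε : 0 ≤ ε)
    (ha : ∀ x ∈ Ioo l r, α ≤ a x) (hk : 0 < k) (hk_residual : 0 < rateResidual α β ε k)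
    (hm : 0 ≤ m) (hm_residual : 0 ≤ rateResidual α β ε m) (hK : 0 ≤ K) (hN : 0 ≤ N)
    (hu : HasSecondDerivOnIcc l r u u' u'')
    (hu_sub : ∀ x ∈ Ioo l r, 0 < u x →
      -ε * u'' x + a x * u' x - β * u x ≤ K * rateResidual α β ε k)
    (hu_left : u l ≤ K) (hu_right : 0 < u r → u' r ≤ N * m) :
    ∀ x ∈ Icc l r, u x ≤ K * exp (k * (x - l)) + N * exp (m * (x - r)) := by
  have hφ := HasSecondDerivOnIcc.exp_mul_sub l r k l
  have hψ := HasSecondDerivOnIcc.exp_mul_sub l r m r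
  have hφ_op {x : ℝ} (hx : x ∈ Ioo l r) :=
    rateResidual_mul_le (β := β) (ε := ε) hk.le (ha x hx) (Real.exp_pos (k * (x - l))).le
  have hψ_op {x : ℝ} (hx : x ∈ Ioo l r) :=
    rateResidual_mul_le (β := β) (ε := ε) hm (ha x hx) (Real.exp_pos (m * (x - r))).le
  refine le_of_pos_supersolution (p := fun _ => ε) (a := a) (c := fun _ => -β)
    (fun _ _ => hε) hφ (fun _ _ => Real.exp_pos _)
    (fun x hx => (mul_pos hk_residual (Real.exp_pos _)).trans_le (hφ_op hx)) (by positivity)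
    hu ((hφ.const_mul K).add (hψ.const_mul N)) (fun _ _ => by positivity)
    (fun x hx hux => ?operator) ?left (fun hur => ?right)
  case operator =>
    have hexp_ge : 1 ≤ exp (k * (x - l)) :=
      Real.one_le_exp (mul_nonneg hk.le (sub_nonneg.2 hx.1.le))
    have hφ_ge : K * rateResidual α β ε k ≤ K * (rateResidual α β ε k * exp (k * (x - l))) := by
      gcongr
      exact le_mul_of_one_le_right hk_residual.le hexp_ge
    have hψ_ge : 0 ≤ N * (rateResidual α β ε m * exp (m * (x - r))) := by positivity
    linarith [hu_sub x hx hux, mul_le_mul_of_nonneg_left (hφ_op hx) hK,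
      mul_le_mul_of_nonneg_left (hψ_op hx) hN]
  case left =>
    simp only [sub_self, mul_zero, Real.exp_zero, mul_one]
    exact hu_left.trans (le_add_of_nonneg_right (by positivity))
  case right =>
    simp only [sub_self, mul_zero, Real.exp_zero, mul_one]
    exact (hu_right hur).trans (le_add_of_nonneg_left (by positivity))

theorem le_exp_mul_add_of_subsolution {L A G F : ℝ} {a u u' u'' : ℝ → ℝ} (hα : 0 < α) (hβ : 0 < β)
    (hγ : 0 < γ) (hε : 0 < ε) (hγε : γ ≤ α ^ 2 - 4 * ε * β) (ha : ∀ x ∈ Ioo 0 L, α ≤ a x)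
    (hA : 0 ≤ A) (hG : 0 ≤ G) (hF : 0 ≤ F) (hu : HasSecondDerivOnIcc 0 L u u' u'')
    (hu_sub : ∀ x ∈ Ioo 0 L, 0 < u x → -ε * u'' x + a x * u' x - β * u x ≤ G)
    (hu_left : u 0 ≤ A) (hu_right : 0 < u L → ε * u' L ≤ F) {x : ℝ} (hx : x ∈ Icc 0 L) :
    u x ≤ (A + G * (α ^ 2 / (β * γ))) * exp (2 * β / α * L) + 2 / α * F := by
  set k := 2 * β / α
  set m := α / (2 * ε) with hm
  set K := A + G * (α ^ 2 / (β * γ))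
  set N := 2 / α * F with hN
  have hm_pos : 0 < m := by positivity
  have hAK : A ≤ K := le_add_of_nonneg_right (by positivity)
  have hk_residual : β * γ / α ^ 2 ≤ rateResidual α β ε k :=
    le_rateResidual_two_mul_div hα hβ.le hγε
  have hGK : G ≤ K * rateResidual α β ε k := by
    calc G = G * (α ^ 2 / (β * γ)) * (β * γ / α ^ 2) := by field_simp
      _ ≤ K * rateResidual α β ε k := by gcongr; exact le_add_of_nonneg_left hA
  have hflux : ε * (N * m) = F := by rw [hN, hm]; field_simp
  have hbarrier : u x ≤ K * exp (k * (x - 0)) + N * exp (m * (x - L)) :=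
    le_exp_add_exp_of_subsolution hε.le ha (by positivity)
      (lt_of_lt_of_le (by positivity) hk_residual) hm_pos.le
      (rateResidual_div_two_mul_nonneg hε (hγ.le.trans hγε)) (by positivity) (by positivity) hu
      (fun y hy huy => (hu_sub y hy huy).trans hGK) (hu_left.trans hAK)
      (fun huL => le_of_mul_le_mul_left ((hu_right huL).trans_eq hflux.symm) hε) x hx
  have hlayer : exp (m * (x - L)) ≤ 1 :=
    Real.exp_le_one_iff.2 (mul_nonpos_of_nonneg_of_nonpos hm_pos.le (sub_nonpos.2 hx.2))
  calc u x ≤ K * exp (k * (x - 0)) + N * exp (m * (x - L)) := hbarrier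
    _ ≤ K * exp (k * L) + N * 1 := by gcongr; rw [sub_zero]; exact hx.2
    _ = K * exp (k * L) + N := by rw [mul_one]

end LinearBound

section OneSidedLipschitz

variable {c s : ℝ} {f : ℝ → ℝ}

theorem mul_sq_le_mul_image_sub_of_le_deriv (hf : Differentiable ℝ f) (hf' : ∀ x, c ≤ deriv f x)
    (x y : ℝ) : c * (y - x) ^ 2 ≤ (y - x) * (f y - f x) := by
  rcases le_total x y with hxy | hyx
  · linarith [mul_le_mul_of_nonneg_left (mul_sub_le_image_sub_of_le_deriv hf hf' hxy)
      (sub_nonneg.2 hxy)]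
  · linarith [mul_le_mul_of_nonneg_left (mul_sub_le_image_sub_of_le_deriv hf hf' hyx)
      (sub_nonneg.2 hyx)]

theorem mul_sub_le_abs_of_pos (hf : c * s ^ 2 ≤ s * (f s - f 0)) (hs : 0 < s) :
    c * s - f s ≤ |f 0| := by
  have hslope : c * s ≤ f s - f 0 := by
    refine le_of_mul_le_mul_left ?_ hs
    linarith
  linarith [neg_abs_le (f 0)]

theorem sub_mul_le_abs_of_neg (hf : c * s ^ 2 ≤ s * (f s - f 0)) (hs : s < 0) :
    f s - c * s ≤ |f 0| := by
  have hslope : f s - f 0 ≤ c * s := by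
    refine (mul_le_mul_left_of_neg hs).1 ?_
    linarith
  linarith [le_abs_self (f 0)]

end OneSidedLipschitz

theorem statement5_general (L : ℝ) {α β γ : ℝ} (hα : 0 < α) (hβ : 0 < β) (hγ : 0 < γ) :
    ∃ C > (0 : ℝ), ∀ ε > (0 : ℝ), γ ≤ α ^ 2 - 4 * ε * β →
      ∀ a g f : ℝ → ℝ, (∀ x ∈ Ioo 0 L, α ≤ a x) →
      (∀ s, -β * s ^ 2 ≤ s * (g s - g 0)) → (∀ s, 0 ≤ s * (f s - f 0)) →
      ∀ u u' u'' : ℝ → ℝ, HasSecondDerivOnIcc 0 L u u' u'' →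
      (∀ x ∈ Ioo 0 L, -ε * u'' x + a x * u' x + g (u x) = 0) →
      ε * u' L + f (u L) = 0 →
      ∀ x ∈ Icc 0 L, |u x| ≤ C * (|u 0| + |g 0| + |f 0|) := by
  set κ := α ^ 2 / (β * γ)
  set X := exp (2 * β / α * L)
  have : 0 < κ := by positivity
  have : 0 < X := Real.exp_pos _
  refine ⟨X + κ * X + 2 / α, by positivity, ?_⟩
  intro ε hε hγε a g f ha hg hf u u' u'' hu hode hR x hx
  have hf' (s : ℝ) : 0 * s ^ 2 ≤ s * (f s - f 0) := (zero_mul _).trans_le (hf s)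
  have hupper : u x ≤ (|u 0| + |g 0| * κ) * X + 2 / α * |f 0| :=
    le_exp_mul_add_of_subsolution hα hβ hγ hε hγε ha (abs_nonneg _) (abs_nonneg _) (abs_nonneg _)
      hu (fun y hy huy => by linarith [hode y hy, mul_sub_le_abs_of_pos (hg _) huy])
      (le_abs_self _) (fun huL => by linarith [mul_sub_le_abs_of_pos (hf' _) huL]) hx
  have hlower : -u x ≤ (|u 0| + |g 0| * κ) * X + 2 / α * |f 0| :=
    le_exp_mul_add_of_subsolution hα hβ hγ hε hγε ha (abs_nonneg _) (abs_nonneg _) (abs_nonneg _)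
      hu.neg (fun y hy huy => by linarith [hode y hy, sub_mul_le_abs_of_neg (hg _) (neg_pos.1 huy)])
      (neg_le_abs _) (fun huL => by linarith [sub_mul_le_abs_of_neg (hf' _) (neg_pos.1 huL)]) hx
  refine (abs_le'.2 ⟨hupper, hlower⟩).trans ?_
  have hslack : 0 ≤ |u 0| * (κ * X + 2 / α) + |g 0| * (X + 2 / α) + |f 0| * (X + κ * X) := by
    positivity
  linarith

/-- Boundedness of solutions: there is `C > 0` depending only on `α, β, γ, L`
(independent of `ε`) such that any twice differentiable solution `u` of
`T_ε u = 0`, `u 0 = A`, `R_ε u = 0` satisfies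
`sup |u| ≤ C (|A| + |g 0| + |f 0|)`. -/
theorem statement5 (L α β γ : ℝ) (hL : 0 < L)
    (hα : 0 < α) (hβ : 0 < β) (hγ : 0 < γ) :
    ∃ C > (0 : ℝ), ∀ ε ∈ Ioc (0 : ℝ) 1, ∀ a g f : ℝ → ℝ,
      ContDiffOn ℝ 1 a (Icc 0 L) → (∀ x ∈ Icc 0 L, α ≤ a x) →
      ContDiff ℝ 2 g → (∀ s : ℝ, -β ≤ deriv g s) →
      ContDiff ℝ 1 f → (∀ s : ℝ, 0 ≤ deriv f s) →
      γ ≤ α ^ 2 - 4 * ε * β →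
      ∀ A : ℝ, ∀ u : ℝ → ℝ,
        (∀ x ∈ Icc 0 L, DifferentiableAt ℝ u x) →
        (∀ x ∈ Icc 0 L, DifferentiableAt ℝ (deriv u) x) →
        (∀ x ∈ Icc 0 L,
          -ε * deriv (deriv u) x + a x * deriv u x + g (u x) = 0) →
        u 0 = A →
        ε * deriv u L + f (u L) = 0 →
        ∀ x ∈ Icc 0 L, |u x| ≤ C * (|A| + |g 0| + |f 0|) := by
  obtain ⟨C, hC, hbound⟩ := statement5_general L hα hβ hγ
  refine ⟨C, hC, ?_⟩
  rintro ε hε a g f - ha hg hg' hf hf' hγε _ u hu hu' hode rfl hR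
  have hg_bound := mul_sq_le_mul_image_sub_of_le_deriv (hg.differentiable two_ne_zero) hg' 0
  have hf_bound := mul_sq_le_mul_image_sub_of_le_deriv (hf.differentiable one_ne_zero) hf' 0
  exact hbound ε hε.1 hγε a g f (fun x hx => ha x (Ioo_subset_Icc_self hx))
    (by simpa only [sub_zero] using hg_bound) (by simpa only [sub_zero, zero_mul] using hf_bound)
    u _ _ (.of_differentiableAt hu hu') (fun x hx => hode x (Ioo_subset_Icc_self hx)) hR
end

section
/- The boundary value problem T_ε u = 0 on [0,L], u(0) = A, R_ε u = 0 has at most one twice differentiable solution: if u₁ and u₂ are both twice differentiable with T_ε u₁ = T_ε u₂ = 0 on [0,L], u₁(0) = u₂(0) = A, and R_ε u₁ = R_ε u₂ = 0, then u₁ = u₂ on [0,L]. -/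
open Set

/-!
Uniqueness follows from inverse monotonicity of the pair `(T_ε, R_ε)`. Suppose `w = u₁ - u₂` is
positive somewhere, and slide multiples of a positive barrier `φ` down onto it: for some `t > 0` the
function `t φ` lies above `w` and touches it at a point `x₀`. At an interior `x₀` the difference
`w - t φ` has a local maximum, so `-ε w'' + a w' ≥ t (-ε φ'' + a φ') > β t φ = β w`, against the
one-sided Lipschitz bound on `g`. At the right end `w' ≥ t φ' > 0`, against the monotonicity of `f`.
The barrier `φ x = exp (l x)` works as soon as `ε l² + β < α l` and `l > 0`, and `α² > 4 ε β` is
what makes such an `l` exist.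
-/

open Filter Topology

theorem deriv_deriv_nonpos_of_isLocalMax {v : ℝ → ℝ} {x : ℝ} (hmax : IsLocalMax v x)
    (hv : ContinuousAt v x) : deriv (deriv v) x ≤ 0 := by
  by_contra! hpos
  have hmin : IsLocalMin v x := isLocalMin_of_deriv_deriv_pos hpos hmax.deriv_eq_zero hv
  have hconst : v =ᶠ[𝓝 x] fun _ ↦ v x := by
    filter_upwards [hmax, hmin] with y hle hge using le_antisymm hle hge
  have hzero : deriv (deriv v) x = 0 := by
    simpa only [deriv_const', deriv_const] using hconst.deriv.deriv_eq
  exact hpos.ne' hzero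

theorem deriv_nonneg_of_isMaxOn_Icc_right_s6 {v : ℝ → ℝ} {b c : ℝ} (hbc : b < c)
    (hmax : IsMaxOn v (Icc b c) c) : 0 ≤ deriv v c := by
  by_cases hv : DifferentiableAt ℝ v c
  · have hcone : b - c ∈ posTangentConeAt (Icc b c) c :=
      sub_mem_posTangentConeAt_of_segment_subset (by rw [segment_symm, segment_eq_Icc hbc.le])
    have hle : (b - c) * deriv v c ≤ 0 := by
      simpa using hmax.localize.hasFDerivWithinAt_nonpos
        hv.hasDerivAt.hasDerivWithinAt.hasFDerivWithinAt hcone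
    exact nonneg_of_mul_nonpos_right hle (sub_neg.2 hbc)
  · exact (deriv_zero_of_not_differentiableAt hv).ge

theorem exists_pos_mul_touching {X : Type*} [TopologicalSpace X] {s : Set X} (hs : IsCompact s)
    {w φ : X → ℝ} (hw : ContinuousOn w s) (hφ : ContinuousOn φ s) (hφ_pos : ∀ x ∈ s, 0 < φ x)
    {y : X} (hy : y ∈ s) (hwy : 0 < w y) :
    ∃ t > 0, ∃ x₀ ∈ s, w x₀ = t * φ x₀ ∧ ∀ x ∈ s, w x ≤ t * φ x := by
  have hquot : ContinuousOn (fun x ↦ w x / φ x) s := hw.div hφ fun x hx ↦ (hφ_pos x hx).ne'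
  obtain ⟨x₀, hx₀, hmax⟩ := hs.exists_isMaxOn ⟨y, hy⟩ hquot
  refine ⟨w x₀ / φ x₀, (div_pos hwy (hφ_pos y hy)).trans_le (hmax hy), x₀, hx₀, ?_, fun x hx ↦ ?_⟩
  · exact (div_mul_cancel₀ _ (hφ_pos x₀ hx₀).ne').symm
  · exact (div_le_iff₀ (hφ_pos x hx)).1 (hmax hx)

theorem exists_pos_mul_sq_add_lt_mul {ε α β : ℝ} (hε : 0 < ε) (hα : 0 < α)
    (hαβ : 4 * ε * β < α ^ 2) : ∃ l > 0, ε * l ^ 2 + β < α * l := by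
  -- `l` maximizes `α l - ε l²`, with maximal value `α² / (4 ε)`.
  refine ⟨α / (2 * ε), by positivity, ?_⟩
  have hβ : β < α ^ 2 / (4 * ε) := by
    rw [lt_div_iff₀ (by positivity)]
    linarith
  calc ε * (α / (2 * ε)) ^ 2 + β < ε * (α / (2 * ε)) ^ 2 + α ^ 2 / (4 * ε) := by gcongr
    _ = α * (α / (2 * ε)) := by field_simp; ring

theorem monotone_add_mul_of_neg_le_deriv {g : ℝ → ℝ} {β : ℝ} (hg : Differentiable ℝ g)
    (hgβ : ∀ s, -β ≤ deriv g s) : Monotone fun s ↦ g s + β * s := by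
  have hderiv (s : ℝ) : HasDerivAt (fun s ↦ g s + β * s) (deriv g s + β) s := by
    simpa using! (hg s).hasDerivAt.add ((hasDerivAt_id s).const_mul β)
  refine monotone_of_deriv_nonneg (fun s ↦ (hderiv s).differentiableAt) fun s ↦ ?_
  rw [(hderiv s).deriv]
  linarith [hgβ s]

theorem deriv_exp_const_mul (l : ℝ) :
    deriv (fun x ↦ Real.exp (l * x)) = l • fun x ↦ Real.exp (l * x) := by
  funext x
  simpa [mul_comm] using! ((hasDerivAt_id x).const_mul l).exp.deriv

section DerivativeCalculus

variable {𝕜 F : Type*} [NontriviallyNormedField 𝕜] [NormedAddCommGroup F] [NormedSpace 𝕜 F]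

theorem deriv_const_smul_eq (t : 𝕜) (w : 𝕜 → F) : deriv (t • w) = t • deriv w :=
  funext fun _ ↦ deriv_const_smul_field t w

theorem eventuallyEq_deriv_sub {v w : 𝕜 → F} {x : 𝕜}
    (hv : ∀ᶠ y in 𝓝 x, DifferentiableAt 𝕜 v y) (hw : ∀ᶠ y in 𝓝 x, DifferentiableAt 𝕜 w y) :
    deriv (v - w) =ᶠ[𝓝 x] deriv v - deriv w := by
  filter_upwards [hv, hw] with y hvy hwy using deriv_sub hvy hwy

end DerivativeCalculus

/-- The linear convection-diffusion operator `w ↦ -ε w'' + a w'`, the linear part of `T_ε`, on which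
the maximum principle is proved. The derivatives are the two-sided `deriv`, also at endpoints. -/
noncomputable def convectionDiffusion (ε : ℝ) (a w : ℝ → ℝ) (x : ℝ) : ℝ :=
  -ε * deriv (deriv w) x + a x * deriv w x

/-- The semilinear operator `T_ε w = -ε w'' + a w' + g(w)` of the boundary value problem. -/
noncomputable def semilinearOp (ε : ℝ) (a g w : ℝ → ℝ) (x : ℝ) : ℝ :=
  convectionDiffusion ε a w x + g (w x)

/-- The nonlinear Robin boundary operator `R_ε w = ε w'(c) + f(w(c))` at the right end `c`. -/
noncomputable def robinOp (ε : ℝ) (f w : ℝ → ℝ) (c : ℝ) : ℝ :=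
  ε * deriv w c + f (w c)

section MaximumPrinciple

variable {ε b c : ℝ} {a : ℝ → ℝ}

theorem convectionDiffusion_sub {v w : ℝ → ℝ} {x : ℝ}
    (hv : ∀ᶠ y in 𝓝 x, DifferentiableAt ℝ v y) (hw : ∀ᶠ y in 𝓝 x, DifferentiableAt ℝ w y)
    (hv' : DifferentiableAt ℝ (deriv v) x) (hw' : DifferentiableAt ℝ (deriv w) x) :
    convectionDiffusion ε a (v - w) x =
      convectionDiffusion ε a v x - convectionDiffusion ε a w x := by
  have hderiv := eventuallyEq_deriv_sub hv hw
  simp only [convectionDiffusion, hderiv.deriv_eq, hderiv.eq_of_nhds, deriv_sub hv' hw',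
    Pi.sub_apply]
  ring

theorem convectionDiffusion_const_smul (t : ℝ) (w : ℝ → ℝ) (x : ℝ) :
    convectionDiffusion ε a (t • w) x = t * convectionDiffusion ε a w x := by
  simp only [convectionDiffusion, deriv_const_smul_eq, Pi.smul_apply, smul_eq_mul]
  ring

theorem convectionDiffusion_nonneg_of_isLocalMax (hε : 0 ≤ ε) {v : ℝ → ℝ} {x : ℝ}
    (hmax : IsLocalMax v x) (hv : ContinuousAt v x) : 0 ≤ convectionDiffusion ε a v x := by
  rw [convectionDiffusion, hmax.deriv_eq_zero, mul_zero, add_zero]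
  exact mul_nonneg_of_nonpos_of_nonpos (neg_nonpos.2 hε) (deriv_deriv_nonpos_of_isLocalMax hmax hv)

theorem convectionDiffusion_exp (l x : ℝ) :
    convectionDiffusion ε a (fun y ↦ Real.exp (l * y)) x =
      (a x * l - ε * l ^ 2) * Real.exp (l * x) := by
  simp only [convectionDiffusion, deriv_exp_const_mul, deriv_const_smul_eq, Pi.smul_apply,
    smul_eq_mul]
  ring

theorem nonpos_of_barrier (hε : 0 ≤ ε) {k w φ : ℝ → ℝ}
    (hφ : ∀ x ∈ Icc b c, DifferentiableAt ℝ φ x)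
    (hφ' : ∀ x ∈ Ioo b c, DifferentiableAt ℝ (deriv φ) x)
    (hφ_pos : ∀ x ∈ Icc b c, 0 < φ x)
    (hφ_super : ∀ x ∈ Ioo b c, k x * φ x < convectionDiffusion ε a φ x)
    (hφ_right : 0 < deriv φ c)
    (hw : ∀ x ∈ Icc b c, DifferentiableAt ℝ w x)
    (hw' : ∀ x ∈ Ioo b c, DifferentiableAt ℝ (deriv w) x)
    (hw_sub : ∀ x ∈ Ioo b c, 0 < w x → convectionDiffusion ε a w x ≤ k x * w x)
    (hw_left : w b ≤ 0) (hw_right : 0 < w c → deriv w c ≤ 0) :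
    ∀ x ∈ Icc b c, w x ≤ 0 := by
  by_contra! ⟨y, hy, hwy⟩
  obtain ⟨t, ht, x₀, hx₀, htouch, hle⟩ := exists_pos_mul_touching isCompact_Icc
    (fun x hx ↦ (hw x hx).continuousAt.continuousWithinAt)
    (fun x hx ↦ (hφ x hx).continuousAt.continuousWithinAt) hφ_pos hy hwy
  have hw_pos : 0 < w x₀ := htouch ▸ mul_pos ht (hφ_pos x₀ hx₀)
  have htφ (x : ℝ) (hx : x ∈ Icc b c) : DifferentiableAt ℝ (t • φ) x := (hφ x hx).const_smul t
  have hmax : IsMaxOn (w - t • φ) (Icc b c) x₀ := fun x hx ↦ by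
    simpa [htouch] using hle x hx
  have hlt : b < x₀ := hx₀.1.lt_of_ne fun h ↦ (h ▸ hw_pos).not_ge hw_left
  rcases hx₀.2.eq_or_lt with rfl | hgt
  · have hderiv : 0 ≤ deriv w x₀ - t * deriv φ x₀ := by
      simpa [deriv_sub (hw x₀ hx₀) (htφ x₀ hx₀), deriv_const_smul_eq] using
        deriv_nonneg_of_isMaxOn_Icc_right_s6 hlt hmax
    linarith [mul_pos ht hφ_right, hw_right hw_pos]
  · have hx₀' : x₀ ∈ Ioo b c := ⟨hlt, hgt⟩
    have hnhds : Icc b c ∈ 𝓝 x₀ := Icc_mem_nhds hlt hgt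
    have htφ' : DifferentiableAt ℝ (deriv (t • φ)) x₀ := by
      rw [deriv_const_smul_eq]
      exact (hφ' x₀ hx₀').const_smul t
    have hnonneg : 0 ≤ convectionDiffusion ε a w x₀ - t * convectionDiffusion ε a φ x₀ := by
      rw [← convectionDiffusion_const_smul, ← convectionDiffusion_sub
        (eventually_of_mem hnhds hw) (eventually_of_mem hnhds htφ) (hw' x₀ hx₀') htφ']
      exact convectionDiffusion_nonneg_of_isLocalMax hε (hmax.isLocalMax hnhds)
        ((hw x₀ hx₀).sub (htφ x₀ hx₀)).continuousAt
    refine lt_irrefl (k x₀ * w x₀) ?_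
    calc k x₀ * w x₀ = t * (k x₀ * φ x₀) := by rw [htouch]; ring
      _ < t * convectionDiffusion ε a φ x₀ := by gcongr; exact hφ_super x₀ hx₀'
      _ ≤ convectionDiffusion ε a w x₀ := sub_nonneg.1 hnonneg
      _ ≤ k x₀ * w x₀ := hw_sub x₀ hx₀' hw_pos

variable {α β : ℝ}

theorem nonpos_of_convectionDiffusion_le (hε : 0 < ε) (hα : 0 < α) (hαβ : 4 * ε * β < α ^ 2)
    (haα : ∀ x ∈ Ioo b c, α ≤ a x) {w : ℝ → ℝ}
    (hw : ∀ x ∈ Icc b c, DifferentiableAt ℝ w x)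
    (hw' : ∀ x ∈ Ioo b c, DifferentiableAt ℝ (deriv w) x)
    (hw_sub : ∀ x ∈ Ioo b c, 0 < w x → convectionDiffusion ε a w x ≤ β * w x)
    (hw_left : w b ≤ 0) (hw_right : 0 < w c → deriv w c ≤ 0) :
    ∀ x ∈ Icc b c, w x ≤ 0 := by
  obtain ⟨l, hl, hlβ⟩ := exists_pos_mul_sq_add_lt_mul hε hα hαβ
  have hφ : ContDiff ℝ 2 fun x ↦ Real.exp (l * x) := by fun_prop
  have hφ_super (x : ℝ) (hx : x ∈ Ioo b c) :
      β * Real.exp (l * x) < convectionDiffusion ε a (fun y ↦ Real.exp (l * y)) x := by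
    rw [convectionDiffusion_exp]
    gcongr
    linarith [mul_le_mul_of_nonneg_right (haα x hx) hl.le]
  have hφ_right : 0 < deriv (fun x ↦ Real.exp (l * x)) c := by
    rw [deriv_exp_const_mul]
    exact mul_pos hl (Real.exp_pos _)
  exact nonpos_of_barrier hε.le (k := fun _ ↦ β)
    (fun x _ ↦ hφ.differentiable two_ne_zero x) (fun x _ ↦ hφ.differentiable_deriv_two x)
    (fun x _ ↦ Real.exp_pos _) hφ_super hφ_right hw hw' hw_sub hw_left hw_right

theorem le_of_semilinearOp_le_of_robinOp_le (hε : 0 < ε) (hα : 0 < α)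
    (hαβ : 4 * ε * β < α ^ 2) (haα : ∀ x ∈ Ioo b c, α ≤ a x) {g f : ℝ → ℝ}
    (hg : Monotone fun s ↦ g s + β * s) (hf : Monotone f) {u₁ u₂ : ℝ → ℝ}
    (hu₁ : ∀ x ∈ Icc b c, DifferentiableAt ℝ u₁ x)
    (hu₁' : ∀ x ∈ Ioo b c, DifferentiableAt ℝ (deriv u₁) x)
    (hu₂ : ∀ x ∈ Icc b c, DifferentiableAt ℝ u₂ x)
    (hu₂' : ∀ x ∈ Ioo b c, DifferentiableAt ℝ (deriv u₂) x)
    (hT : ∀ x ∈ Ioo b c, semilinearOp ε a g u₁ x ≤ semilinearOp ε a g u₂ x)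
    (hleft : u₁ b ≤ u₂ b) (hR : robinOp ε f u₁ c ≤ robinOp ε f u₂ c) :
    ∀ x ∈ Icc b c, u₁ x ≤ u₂ x := by
  intro x hx
  have hev₁ {y : ℝ} (hy : y ∈ Ioo b c) : ∀ᶠ z in 𝓝 y, DifferentiableAt ℝ u₁ z :=
    eventually_of_mem (Icc_mem_nhds hy.1 hy.2) hu₁
  have hev₂ {y : ℝ} (hy : y ∈ Ioo b c) : ∀ᶠ z in 𝓝 y, DifferentiableAt ℝ u₂ z :=
    eventually_of_mem (Icc_mem_nhds hy.1 hy.2) hu₂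
  refine sub_nonpos.1 (nonpos_of_convectionDiffusion_le (w := u₁ - u₂) hε hα hαβ haα
    (fun y hy ↦ (hu₁ y hy).sub (hu₂ y hy)) (fun y hy ↦ ?_) (fun y hy hpos ↦ ?_)
    (sub_nonpos.2 hleft) (fun hpos ↦ ?_) x hx)
  · exact ((hu₁' y hy).sub (hu₂' y hy)).congr_of_eventuallyEq
      (eventuallyEq_deriv_sub (hev₁ hy) (hev₂ hy))
  · rw [convectionDiffusion_sub (hev₁ hy) (hev₂ hy) (hu₁' y hy) (hu₂' y hy), Pi.sub_apply]
    have hmono : g (u₂ y) + β * u₂ y ≤ g (u₁ y) + β * u₁ y := hg (sub_pos.1 hpos).le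
    have hTy := hT y hy
    simp only [semilinearOp] at hTy
    linarith
  · have hc : c ∈ Icc b c := right_mem_Icc.2 (hx.1.trans hx.2)
    have hmono : f (u₂ c) ≤ f (u₁ c) := hf (sub_pos.1 hpos).le
    rw [deriv_sub (hu₁ c hc) (hu₂ c hc), sub_nonpos]
    refine le_of_mul_le_mul_left ?_ hε
    simp only [robinOp] at hR
    linarith

theorem statement6_general (hε : 0 < ε) (hα : 0 < α) (hαβ : 4 * ε * β < α ^ 2)
    (haα : ∀ x ∈ Ioo b c, α ≤ a x) {g f : ℝ → ℝ}
    (hg : Monotone fun s ↦ g s + β * s) (hf : Monotone f) {u₁ u₂ : ℝ → ℝ}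
    (hu₁ : ∀ x ∈ Icc b c, DifferentiableAt ℝ u₁ x)
    (hu₁' : ∀ x ∈ Ioo b c, DifferentiableAt ℝ (deriv u₁) x)
    (hu₂ : ∀ x ∈ Icc b c, DifferentiableAt ℝ u₂ x)
    (hu₂' : ∀ x ∈ Ioo b c, DifferentiableAt ℝ (deriv u₂) x)
    (hT : EqOn (semilinearOp ε a g u₁) (semilinearOp ε a g u₂) (Ioo b c))
    (hleft : u₁ b = u₂ b) (hR : robinOp ε f u₁ c = robinOp ε f u₂ c) :
    EqOn u₁ u₂ (Icc b c) := fun x hx ↦ le_antisymm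
  (le_of_semilinearOp_le_of_robinOp_le hε hα hαβ haα hg hf hu₁ hu₁' hu₂ hu₂'
    (fun _ hy ↦ (hT hy).le) hleft.le hR.le x hx)
  (le_of_semilinearOp_le_of_robinOp_le hε hα hαβ haα hg hf hu₂ hu₂' hu₁ hu₁'
    (fun _ hy ↦ (hT hy).ge) hleft.ge hR.ge x hx)

end MaximumPrinciple

/-- Uniqueness: the boundary value problem `T_ε u = 0` on `[0, L]`, `u 0 = A`,
`R_ε u = 0` has at most one twice differentiable solution. -/
theorem statement6 (L ε α β γ A : ℝ) (hL : 0 < L) (hε : ε ∈ Ioc (0 : ℝ) 1)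
    (hα : 0 < α) (hβ : 0 < β) (hγ : 0 < γ)
    (hγε : γ ≤ α ^ 2 - 4 * ε * β)
    (a g f : ℝ → ℝ)
    (ha : ContDiffOn ℝ 1 a (Icc 0 L)) (haα : ∀ x ∈ Icc 0 L, α ≤ a x)
    (hg : ContDiff ℝ 2 g) (hgβ : ∀ s : ℝ, -β ≤ deriv g s)
    (hf : ContDiff ℝ 1 f) (hf0 : ∀ s : ℝ, 0 ≤ deriv f s)
    (u₁ u₂ : ℝ → ℝ)
    (hu₁ : ∀ x ∈ Icc 0 L, DifferentiableAt ℝ u₁ x)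
    (hu₁' : ∀ x ∈ Icc 0 L, DifferentiableAt ℝ (deriv u₁) x)
    (hu₂ : ∀ x ∈ Icc 0 L, DifferentiableAt ℝ u₂ x)
    (hu₂' : ∀ x ∈ Icc 0 L, DifferentiableAt ℝ (deriv u₂) x)
    (heq₁ : ∀ x ∈ Icc 0 L,
      -ε * deriv (deriv u₁) x + a x * deriv u₁ x + g (u₁ x) = 0)
    (heq₂ : ∀ x ∈ Icc 0 L,
      -ε * deriv (deriv u₂) x + a x * deriv u₂ x + g (u₂ x) = 0)
    (hbc₁ : u₁ 0 = A) (hbc₂ : u₂ 0 = A)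
    (hR₁ : ε * deriv u₁ L + f (u₁ L) = 0)
    (hR₂ : ε * deriv u₂ L + f (u₂ L) = 0) :
    ∀ x ∈ Icc 0 L, u₁ x = u₂ x := by
  have hsub : Ioo 0 L ⊆ Icc 0 L := Ioo_subset_Icc_self
  exact statement6_general hε.1 hα (by linarith) (fun x hx ↦ haα x (hsub hx))
    (monotone_add_mul_of_neg_le_deriv (hg.differentiable two_ne_zero) hgβ)
    (monotone_of_deriv_nonneg (hf.differentiable one_ne_zero) hf0)
    hu₁ (fun x hx ↦ hu₁' x (hsub hx)) hu₂ (fun x hx ↦ hu₂' x (hsub hx))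
    (fun x hx ↦ (heq₁ x (hsub hx)).trans (heq₂ x (hsub hx)).symm)
    (hbc₁.trans hbc₂.symm) (hR₁.trans hR₂.symm)
end

section
/- Let c : [0,1] → ℝ be continuous with c(x) ≥ α > 0, let r : [0,1] → ℝ be continuous, and let ε > 0. If z : [0,1] → ℝ is twice differentiable with (ε + x)² z''(x) − c(x) z(x) = r(x) on [0,1] and z(0) = z(1) = 0, then sup_{x∈[0,1]} |z(x)| ≤ (1/α) sup_{x∈[0,1]} |r(x)|. -/
open Set

/-!
With `p ≥ 0` and `c > 0`, the operator `L w = p w'' + q w' - c w` obeys a maximum principle: at a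
positive interior maximum of `w` one has `w' = 0` and `w'' ≤ 0`, hence `L w < 0`. So `L w ≥ 0`
together with `w ≤ 0` at the endpoints forces `w ≤ 0`. Since `L (± z - K) = ± L z + c K`, the
constant `K = sup |r| / α` is a barrier for both `z` and `-z`.
-/

open Filter Topology in
theorem second_deriv_nonpos_of_isLocalMax_s10 {f f' : ℝ → ℝ} {f'' x : ℝ}
    (hf : ∀ᶠ y in 𝓝 x, HasDerivAt f (f' y) y) (hf' : HasDerivAt f' f'' x)
    (hmax : IsLocalMax f x) : f'' ≤ 0 := by
  have hderiv : deriv f =ᶠ[𝓝 x] f' := hf.mono fun _ hy => hy.deriv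
  have hderiv2 : deriv (deriv f) x = f'' := hderiv.deriv_eq.trans hf'.deriv
  by_contra! hpos
  have hmin : IsLocalMin f x :=
    isLocalMin_of_deriv_deriv_pos (hderiv2 ▸ hpos) hmax.deriv_eq_zero
      hf.self_of_nhds.continuousAt
  have hconst : f =ᶠ[𝓝 x] fun _ => f x := by
    filter_upwards [hmax, hmin] with y hle hge using le_antisymm hle hge
  have hzero : deriv (deriv f) x = 0 := by simpa using hconst.deriv.deriv_eq
  exact hpos.ne' (hderiv2.symm.trans hzero)

section MaximumPrinciple

variable {a b : ℝ} {p q c : ℝ → ℝ}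

theorem nonpos_of_elliptic_nonneg {w w' w'' : ℝ → ℝ}
    (hp : ∀ x ∈ Ioo a b, 0 ≤ p x) (hc : ∀ x ∈ Ioo a b, 0 < c x)
    (hcont : ContinuousOn w (Icc a b))
    (hw : ∀ x ∈ Ioo a b, HasDerivAt w (w' x) x)
    (hw' : ∀ x ∈ Ioo a b, HasDerivAt w' (w'' x) x)
    (hL : ∀ x ∈ Ioo a b, 0 ≤ p x * w'' x + q x * w' x - c x * w x)
    (ha : w a ≤ 0) (hb : w b ≤ 0) : ∀ x ∈ Icc a b, w x ≤ 0 := by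
  intro x hx
  obtain ⟨ξ, hξ, hmax⟩ := isCompact_Icc.exists_isMaxOn ⟨x, hx⟩ hcont
  by_contra! hwx
  have hwξ : 0 < w ξ := hwx.trans_le (hmax hx)
  have haξ : a < ξ := hξ.1.lt_of_ne fun h => (h ▸ hwξ).not_ge ha
  have hξb : ξ < b := hξ.2.lt_of_ne fun h => (h ▸ hwξ).not_ge hb
  have hξ' : ξ ∈ Ioo a b := ⟨haξ, hξb⟩
  have hloc : IsLocalMax w ξ := hmax.isLocalMax (Icc_mem_nhds haξ hξb)
  have hfirst : w' ξ = 0 := hloc.hasDerivAt_eq_zero (hw ξ hξ')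
  have hsecond : w'' ξ ≤ 0 :=
    second_deriv_nonpos_of_isLocalMax_s10 (Filter.mem_of_superset (Ioo_mem_nhds haξ hξb) hw)
      (hw' ξ hξ') hloc
  have hneg : p ξ * w'' ξ + q ξ * w' ξ - c ξ * w ξ < 0 := by
    rw [hfirst, mul_zero, add_zero, sub_neg]
    exact (mul_nonpos_of_nonneg_of_nonpos (hp ξ hξ') hsecond).trans_lt (mul_pos (hc ξ hξ') hwξ)
  exact hneg.not_ge (hL ξ hξ')

theorem abs_le_of_abs_elliptic_le {z z' z'' : ℝ → ℝ} {K : ℝ}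
    (hp : ∀ x ∈ Ioo a b, 0 ≤ p x) (hc : ∀ x ∈ Ioo a b, 0 < c x)
    (hcont : ContinuousOn z (Icc a b))
    (hz : ∀ x ∈ Ioo a b, HasDerivAt z (z' x) x)
    (hz' : ∀ x ∈ Ioo a b, HasDerivAt z' (z'' x) x)
    (hL : ∀ x ∈ Ioo a b, |p x * z'' x + q x * z' x - c x * z x| ≤ c x * K)
    (ha : |z a| ≤ K) (hb : |z b| ≤ K) : ∀ x ∈ Icc a b, |z x| ≤ K := by
  intro x hx
  rw [abs_le] at ha hb
  have hupper : z x - K ≤ 0 :=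
    nonpos_of_elliptic_nonneg (w := fun y => z y - K) (q := q) hp hc
      (hcont.sub continuousOn_const)
      (fun y hy => (hz y hy).sub_const K) hz'
      (fun y hy => by linarith [(abs_le.1 (hL y hy)).1]) (by linarith) (by linarith) x hx
  have hlower : -z x - K ≤ 0 :=
    nonpos_of_elliptic_nonneg (w := fun y => -z y - K) (q := q) hp hc
      (hcont.neg.sub continuousOn_const)
      (fun y hy => (hz y hy).fun_neg.sub_const K) (fun y hy => (hz' y hy).fun_neg)
      (fun y hy => by linarith [(abs_le.1 (hL y hy)).2]) (by linarith) (by linarith) x hx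
  exact abs_le.2 ⟨by linarith, by linarith⟩

theorem statement10_general {α : ℝ} {r z z' z'' : ℝ → ℝ} (hα : 0 < α)
    (hp : ∀ x ∈ Ioo a b, 0 ≤ p x) (hcα : ∀ x ∈ Ioo a b, α ≤ c x)
    (hr : BddAbove ((fun y => |r y|) '' Icc a b))
    (hcont : ContinuousOn z (Icc a b))
    (hz : ∀ x ∈ Ioo a b, HasDerivAt z (z' x) x)
    (hz' : ∀ x ∈ Ioo a b, HasDerivAt z' (z'' x) x)
    (heq : ∀ x ∈ Ioo a b, p x * z'' x + q x * z' x - c x * z x = r x)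
    (hza : z a = 0) (hzb : z b = 0) :
    ∀ x ∈ Icc a b, |z x| ≤ (1 / α) * sSup ((fun y => |r y|) '' Icc a b) := by
  set M := sSup ((fun y => |r y|) '' Icc a b)
  have hM : 0 ≤ M := Real.sSup_nonneg (forall_mem_image.2 fun y _ => abs_nonneg (r y))
  have hK : 0 ≤ 1 / α * M := by positivity
  refine abs_le_of_abs_elliptic_le (q := q) hp (fun y hy => hα.trans_le (hcα y hy)) hcont hz hz'
    (fun y hy => ?_) (by simpa [hza] using hK) (by simpa [hzb] using hK)
  calc |p y * z'' y + q y * z' y - c y * z y| = |r y| := by rw [heq y hy]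
    _ ≤ M := le_csSup hr (mem_image_of_mem _ (Ioo_subset_Icc_self hy))
    _ = α * (1 / α * M) := by field_simp
    _ ≤ c y * (1 / α * M) := mul_le_mul_of_nonneg_right (hcα y hy) hK

end MaximumPrinciple

/-- Maximum-principle stability bound for `L z x = (ε + x)² z'' x - c x * z x`:
if `c ≥ α > 0`, `L z = r` on `[0,1]` and `z 0 = z 1 = 0`, then
`sup |z| ≤ (1/α) sup |r|`. -/
theorem statement10 (ε α : ℝ) (hε : 0 < ε) (hα : 0 < α)
    (c r : ℝ → ℝ)
    (hc : ContinuousOn c (Icc 0 1)) (hcα : ∀ x ∈ Icc (0 : ℝ) 1, α ≤ c x)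
    (hr : ContinuousOn r (Icc 0 1))
    (z : ℝ → ℝ)
    (hz : ∀ x ∈ Icc (0 : ℝ) 1, DifferentiableAt ℝ z x)
    (hz' : ∀ x ∈ Icc (0 : ℝ) 1, DifferentiableAt ℝ (deriv z) x)
    (heq : ∀ x ∈ Icc (0 : ℝ) 1,
      (ε + x) ^ 2 * deriv (deriv z) x - c x * z x = r x)
    (hz0 : z 0 = 0) (hz1 : z 1 = 0) :
    ∀ x ∈ Icc (0 : ℝ) 1,
      |z x| ≤ (1 / α) * sSup ((fun y => |r y|) '' Icc 0 1) :=
  statement10_general (q := 0) hα (fun x _ => sq_nonneg (ε + x))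
    (fun x hx => hcα x (Ioo_subset_Icc_self hx)) (isCompact_Icc.bddAbove_image hr.abs)
    (fun x hx => (hz x hx).continuousAt.continuousWithinAt)
    (fun x hx => (hz x (Ioo_subset_Icc_self hx)).hasDerivAt)
    (fun x hx => (hz' x (Ioo_subset_Icc_self hx)).hasDerivAt)
    (fun x hx => by simpa using heq x (Ioo_subset_Icc_self hx)) hz0 hz1
end

section
/- Let u : [0,1] → ℝ be a twice differentiable solution of (ε + x)² u''(x) − f(x, u(x)) = 0 on [0,1] with u(0) = A and u(1) = B. Then there exists a constant C > 0 independent of ε such that |u'(x)| ≤ C/(ε + x) for all x ∈ [0,1]. -/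
open Set

/-!
Outside a fixed band `|s| ≤ R` the nonlinearity `f x s` has the sign of `s`, because `f x` grows at
rate at least `α`. At an interior extremum of `u` beyond this band, `u''` would then have the sign
of `u`; so the maximum principle bounds `|u|` by a constant `M` free of `ε`, and the equation gives
`(ε + x)² |u''| ≤ K` with `K` the maximum of `|f|` on `[0, 1] × [-M, M]`. Interpolating `u'` between
`u` and `u''` on a window of length `(ε + x) / 4` yields `|u'| ≤ (8 M + K) / (ε + x)`.
-/

open scoped Topology

lemma nonpos_of_isLocalMax_of_hasDerivAt {u u' : ℝ → ℝ} {c z : ℝ} (hmax : IsLocalMax u z)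
    (hu : ∀ᶠ y in 𝓝 z, HasDerivAt u (u' y) y) (hu' : HasDerivAt u' c z) : c ≤ 0 := by
  by_contra! hc
  have hderiv : deriv u =ᶠ[𝓝 z] u' := hu.mono fun _ hy => hy.deriv
  have hderiv2 : deriv (deriv u) z = c := hderiv.deriv_eq.trans hu'.deriv
  have hmin : IsLocalMin u z := isLocalMin_of_deriv_deriv_pos (hderiv2.symm ▸ hc)
    hmax.deriv_eq_zero hu.self_of_nhds.continuousAt
  have hconst : u =ᶠ[𝓝 z] fun _ => u z := hmax.mp (hmin.mono fun _ hle hge => le_antisymm hge hle)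
  have hzero : deriv (deriv u) z = 0 := by simpa using hconst.deriv.deriv_eq
  exact hc.ne' (hderiv2.symm.trans hzero)

section MaximumPrinciple

variable {u u' u'' : ℝ → ℝ} {a b M : ℝ}

lemma le_of_deriv2_pos_of_lt (hc : ContinuousOn u (Icc a b))
    (hu : ∀ x ∈ Ioo a b, HasDerivAt u (u' x) x) (hu' : ∀ x ∈ Ioo a b, HasDerivAt u' (u'' x) x)
    (hpos : ∀ x ∈ Ioo a b, M < u x → 0 < u'' x) (ha : u a ≤ M) (hb : u b ≤ M) :
    ∀ x ∈ Icc a b, u x ≤ M := by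
  intro x hx
  obtain ⟨z, hz, hmax⟩ := isCompact_Icc.exists_isMaxOn ⟨x, hx⟩ hc
  refine (hmax hx).trans ?_
  by_contra! hM
  have hza : a < z := hz.1.lt_of_ne (by rintro rfl; exact hM.not_ge ha)
  have hzb : z < b := hz.2.lt_of_ne (by rintro rfl; exact hM.not_ge hb)
  have hnonpos : u'' z ≤ 0 := nonpos_of_isLocalMax_of_hasDerivAt
    (hmax.isLocalMax (Icc_mem_nhds hza hzb))
    (Filter.eventually_of_mem (Ioo_mem_nhds hza hzb) hu) (hu' z ⟨hza, hzb⟩)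
  exact hnonpos.not_gt (hpos z ⟨hza, hzb⟩ hM)

lemma abs_le_of_mul_deriv2_pos_of_lt_abs (hc : ContinuousOn u (Icc a b))
    (hu : ∀ x ∈ Ioo a b, HasDerivAt u (u' x) x) (hu' : ∀ x ∈ Ioo a b, HasDerivAt u' (u'' x) x)
    (hpos : ∀ x ∈ Ioo a b, M < |u x| → 0 < u x * u'' x) (ha : |u a| ≤ M) (hb : |u b| ≤ M) :
    ∀ x ∈ Icc a b, |u x| ≤ M := by
  have hM : 0 ≤ M := (abs_nonneg _).trans ha
  have hupper : ∀ x ∈ Icc a b, u x ≤ M := by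
    refine le_of_deriv2_pos_of_lt hc hu hu' (fun x hx hlt => ?_) (le_of_abs_le ha) (le_of_abs_le hb)
    exact pos_of_mul_pos_right (hpos x hx (hlt.trans_le (le_abs_self _))) (hM.trans hlt.le)
  have hlower : ∀ x ∈ Icc a b, -u x ≤ M := by
    refine le_of_deriv2_pos_of_lt (u := fun x => -u x) hc.neg (fun x hx => (hu x hx).fun_neg)
      (fun x hx => (hu' x hx).fun_neg) (fun x hx hlt => ?_)
      ((neg_le_abs _).trans ha) ((neg_le_abs _).trans hb)
    have hprod : 0 < -u x * -u'' x := by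
      simpa only [neg_mul_neg] using hpos x hx (hlt.trans_le (neg_le_abs _))
    exact pos_of_mul_pos_right hprod (hM.trans hlt.le)
  exact fun x hx => abs_le'.2 ⟨hupper x hx, hlower x hx⟩

end MaximumPrinciple

lemma exists_forall_mul_pos_of_le_deriv {X : Type*} [TopologicalSpace X] {K : Set X}
    (hK : IsCompact K) {f : X → ℝ → ℝ} {α : ℝ} (hα : 0 < α)
    (hf0 : ContinuousOn (fun x => f x 0) K) (hfu : ∀ x ∈ K, ∀ s, α ≤ deriv (f x) s) :
    ∃ R, ∀ x ∈ K, ∀ s, R < |s| → 0 < s * f x s := by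
  obtain ⟨F, hF⟩ := hK.exists_bound_of_continuousOn hf0
  refine ⟨F / α, fun x hx s hs => ?_⟩
  rw [div_lt_iff₀' hα] at hs
  have hFx : |f x 0| ≤ F := hF x hx
  have hd : Differentiable ℝ (f x) := fun t =>
    differentiableAt_of_deriv_ne_zero (hα.trans_le (hfu x hx t)).ne'
  have hmono := mul_sub_le_image_sub_of_le_deriv hd (hfu x hx)
  rcases le_total 0 s with h | h
  · have hgrowth := hmono h
    rw [abs_of_nonneg h] at hs
    have hfs : 0 < f x s := by linarith [neg_le_of_abs_le hFx]
    have hs0 : 0 < s := pos_of_mul_pos_right (((abs_nonneg _).trans hFx).trans_lt hs) hα.le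
    exact mul_pos hs0 hfs
  · have hgrowth := hmono h
    rw [abs_of_nonpos h] at hs
    have hfs : f x s < 0 := by linarith [le_of_abs_le hFx]
    have hs0 : 0 < -s := pos_of_mul_pos_right (((abs_nonneg _).trans hFx).trans_lt hs) hα.le
    exact mul_pos_of_neg_of_neg (neg_pos.1 hs0) hfs

lemma exists_Icc_subset_Icc_of_two_mul_le {a b h x : ℝ} (hh : 0 ≤ h) (hab : 2 * h ≤ b - a)
    (hx : x ∈ Icc a b) : ∃ c, x ∈ Icc c (c + h) ∧ Icc c (c + h) ⊆ Icc a b := by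
  rcases le_total (x + h) b with hle | hle
  · exact ⟨x, ⟨le_rfl, by linarith⟩, Icc_subset_Icc hx.1 hle⟩
  · exact ⟨x - h, ⟨by linarith, by linarith⟩, Icc_subset_Icc (by linarith) (by linarith [hx.2])⟩

section Interpolation

variable {E : Type*} [NormedAddCommGroup E] [NormedSpace ℝ E] {u u' u'' : ℝ → E} {a b x M : ℝ}

lemma norm_deriv_le_of_norm_le_of_norm_deriv2_le {N : ℝ} (hab : a < b)
    (hu : ∀ y ∈ Icc a b, HasDerivWithinAt u (u' y) (Icc a b) y)
    (hu' : ∀ y ∈ Icc a b, HasDerivWithinAt u' (u'' y) (Icc a b) y)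
    (ha : ‖u a‖ ≤ M) (hb : ‖u b‖ ≤ M) (hN : ∀ y ∈ Icc a b, ‖u'' y‖ ≤ N) (hx : x ∈ Icc a b) :
    ‖u' x‖ ≤ 2 * M / (b - a) + N * (b - a) := by
  have hlen : 0 < b - a := sub_pos.2 hab
  have hN0 : 0 ≤ N := (norm_nonneg _).trans (hN x hx)
  have hosc : ∀ y ∈ Icc a b, ‖u' y - u' x‖ ≤ N * (b - a) := fun y hy =>
    ((convex_Icc a b).norm_image_sub_le_of_norm_hasDerivWithin_le hu' hN hx hy).trans
      (mul_le_mul_of_nonneg_left (Real.dist_le_of_mem_Icc hy hx) hN0)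
  have htangent : ‖(u b - b • u' x) - (u a - a • u' x)‖ ≤ N * (b - a) * (b - a) := by
    have hderiv : ∀ y ∈ Icc a b,
        HasDerivWithinAt (fun t => u t - t • u' x) (u' y - u' x) (Icc a b) y := fun y hy => by
      simpa only [id, one_smul] using
        (hu y hy).fun_sub ((hasDerivWithinAt_id y _).smul_const (u' x))
    simpa only [Real.norm_of_nonneg hlen.le] using
      (convex_Icc a b).norm_image_sub_le_of_norm_hasDerivWithin_le hderiv hosc
        (left_mem_Icc.2 hab.le) (right_mem_Icc.2 hab.le)
  have hscaled : (b - a) * ‖u' x‖ ≤ 2 * M + N * (b - a) * (b - a) := by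
    calc (b - a) * ‖u' x‖ = ‖(b - a) • u' x‖ := by rw [norm_smul, Real.norm_of_nonneg hlen.le]
      _ = ‖(u b - u a) - ((u b - b • u' x) - (u a - a • u' x))‖ := by congr 1; module
      _ ≤ (‖u b‖ + ‖u a‖) + N * (b - a) * (b - a) :=
        norm_sub_le_of_le (norm_sub_le _ _) htangent
      _ ≤ 2 * M + N * (b - a) * (b - a) := by linarith
  calc ‖u' x‖ ≤ (2 * M + N * (b - a) * (b - a)) / (b - a) := (le_div_iff₀' hlen).2 hscaled
    _ = 2 * M / (b - a) + N * (b - a) := by field_simp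

lemma norm_deriv_le_div_of_sq_mul_norm_deriv2_le {c K : ℝ} (hca : 0 < c + a)
    (hcab : c + a ≤ b - a)
    (hu : ∀ y ∈ Icc a b, HasDerivWithinAt u (u' y) (Icc a b) y)
    (hu' : ∀ y ∈ Icc a b, HasDerivWithinAt u' (u'' y) (Icc a b) y)
    (hM : ∀ y ∈ Icc a b, ‖u y‖ ≤ M) (hK : ∀ y ∈ Icc a b, (c + y) ^ 2 * ‖u'' y‖ ≤ K)
    (hx : x ∈ Icc a b) :
    ‖u' x‖ ≤ (8 * M + K) / (c + x) := by
  have hcx : 0 < c + x := by linarith [hx.1]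
  -- On a window of length `(c + x) / 4` around `x` the weight `c + y` is comparable to `c + x`.
  obtain ⟨l, hxl, hsub⟩ := exists_Icc_subset_Icc_of_two_mul_le (h := (c + x) / 4)
    (by positivity) (by linarith [hx.2]) hx
  have hlr : l < l + (c + x) / 4 := by linarith
  have hN : ∀ y ∈ Icc l (l + (c + x) / 4), ‖u'' y‖ ≤ 4 * K / (c + x) ^ 2 := fun y hy => by
    have hweight : (c + x) / 2 ≤ c + y := by linarith [hy.1, hxl.2]
    rw [le_div_iff₀ (by positivity)]
    calc ‖u'' y‖ * (c + x) ^ 2 = 4 * (((c + x) / 2) ^ 2 * ‖u'' y‖) := by ring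
      _ ≤ 4 * ((c + y) ^ 2 * ‖u'' y‖) := by gcongr
      _ ≤ 4 * K := by linarith [hK y (hsub hy)]
  calc ‖u' x‖
      ≤ 2 * M / (l + (c + x) / 4 - l) + 4 * K / (c + x) ^ 2 * (l + (c + x) / 4 - l) :=
        norm_deriv_le_of_norm_le_of_norm_deriv2_le hlr
          (fun y hy => (hu y (hsub hy)).mono hsub) (fun y hy => (hu' y (hsub hy)).mono hsub)
          (hM _ (hsub (left_mem_Icc.2 hlr.le))) (hM _ (hsub (right_mem_Icc.2 hlr.le))) hN hxl
    _ = (8 * M + K) / (c + x) := by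
        rw [add_sub_cancel_left]
        field_simp
        ring

end Interpolation

theorem statement12_general (A B R : ℝ) {f : ℝ → ℝ → ℝ}
    (hf : ContinuousOn (Function.uncurry f) (Icc 0 1 ×ˢ univ))
    (hsign : ∀ x ∈ Icc (0 : ℝ) 1, ∀ s, R < |s| → 0 < s * f x s) :
    ∃ C > (0 : ℝ), ∀ ε ∈ Ioc (0 : ℝ) 1, ∀ u u' u'' : ℝ → ℝ,
      (∀ x ∈ Icc (0 : ℝ) 1, HasDerivWithinAt u (u' x) (Icc 0 1) x) →
      (∀ x ∈ Icc (0 : ℝ) 1, HasDerivWithinAt u' (u'' x) (Icc 0 1) x) →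
      (∀ x ∈ Icc (0 : ℝ) 1, (ε + x) ^ 2 * u'' x = f x (u x)) →
      u 0 = A → u 1 = B →
      ∀ x ∈ Icc (0 : ℝ) 1, |u' x| ≤ C / (ε + x) := by
  obtain ⟨M, hRM, hAM, hBM⟩ : ∃ M, R ≤ M ∧ |A| ≤ M ∧ |B| ≤ M :=
    ⟨max R (max |A| |B|), by simp, by simp, by simp⟩
  obtain ⟨K, hK⟩ := (isCompact_Icc.prod isCompact_Icc).exists_bound_of_continuousOn
    (hf.mono (prod_mono_right (subset_univ (Icc (-M) M))))
  have hM0 : 0 ≤ M := (abs_nonneg A).trans hAM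
  have hK0 : 0 ≤ K := (norm_nonneg _).trans (hK (0, 0) (by simp [hM0]))
  refine ⟨8 * M + K + 1, by positivity, fun ε hε u u' u'' hu hu' hode h0 h1 x hx => ?_⟩
  have hbound : ∀ y ∈ Icc (0 : ℝ) 1, |u y| ≤ M := by
    refine abs_le_of_mul_deriv2_pos_of_lt_abs (u' := u') (u'' := u'')
      (fun y hy => (hu y hy).continuousWithinAt)
      (fun y hy => (hu y (Ioo_subset_Icc_self hy)).hasDerivAt (Icc_mem_nhds hy.1 hy.2))
      (fun y hy => (hu' y (Ioo_subset_Icc_self hy)).hasDerivAt (Icc_mem_nhds hy.1 hy.2))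
      (fun y hy hlt => ?_) (h0 ▸ hAM) (h1 ▸ hBM)
    have hprod : 0 < (ε + y) ^ 2 * (u y * u'' y) := by
      rw [mul_left_comm, hode y (Ioo_subset_Icc_self hy)]
      exact hsign y (Ioo_subset_Icc_self hy) (u y) (hRM.trans_lt hlt)
    exact pos_of_mul_pos_right hprod (sq_nonneg _)
  have hweighted : ∀ y ∈ Icc (0 : ℝ) 1, (ε + y) ^ 2 * ‖u'' y‖ ≤ K := fun y hy => by
    rw [← Real.norm_of_nonneg (sq_nonneg (ε + y)), ← norm_mul, hode y hy]
    exact hK (y, u y) ⟨hy, abs_le.1 (hbound y hy)⟩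
  have hεx : 0 ≤ ε + x := add_nonneg hε.1.le hx.1
  calc |u' x| ≤ (8 * M + K) / (ε + x) := norm_deriv_le_div_of_sq_mul_norm_deriv2_le
        (by linarith [hε.1]) (by linarith [hε.2]) hu hu' hbound hweighted hx
    _ ≤ (8 * M + K + 1) / (ε + x) :=
        div_le_div_of_nonneg_right (le_add_of_nonneg_right zero_le_one) hεx

/-- Derivative estimate exhibiting the power-law boundary layer: there is
`C > 0` independent of `ε` such that any twice differentiable solution of
`(ε + x)² u'' = f (x, u)` on `[0,1]` with `u 0 = A`, `u 1 = B` satisfies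
`|u' x| ≤ C / (ε + x)`. -/
theorem statement12 (α A B : ℝ) (hα : 0 < α)
    (f : ℝ → ℝ → ℝ)
    (hf : ContDiff ℝ 1 (Function.uncurry f))
    (hfu : ∀ x ∈ Icc (0 : ℝ) 1, ∀ s : ℝ, α ≤ deriv (fun t => f x t) s) :
    ∃ C > (0 : ℝ), ∀ ε ∈ Ioc (0 : ℝ) 1,
      ∀ u : ℝ → ℝ,
        (∀ x ∈ Icc (0 : ℝ) 1, DifferentiableAt ℝ u x) →
        (∀ x ∈ Icc (0 : ℝ) 1, DifferentiableAt ℝ (deriv u) x) →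
        (∀ x ∈ Icc (0 : ℝ) 1,
          (ε + x) ^ 2 * deriv (deriv u) x - f x (u x) = 0) →
        u 0 = A → u 1 = B →
        ∀ x ∈ Icc (0 : ℝ) 1, |deriv u x| ≤ C / (ε + x) := by
  have hf0 : Continuous fun x => f x 0 := hf.continuous.comp (Continuous.prodMk_left 0)
  obtain ⟨R, hR⟩ := exists_forall_mul_pos_of_le_deriv isCompact_Icc hα hf0.continuousOn hfu
  obtain ⟨C, hC, hbound⟩ := statement12_general A B R hf.continuous.continuousOn hR
  exact ⟨C, hC, fun ε hε u hu hu' hode => hbound ε hε u (deriv u) (deriv (deriv u))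
    (fun x hx => (hu x hx).hasDerivAt.hasDerivWithinAt)
    (fun x hx => (hu' x hx).hasDerivAt.hasDerivWithinAt)
    fun x hx => sub_eq_zero.1 (hode x hx)⟩
end

section
/- For the mesh x_n = ε[(1 + 1/ε)^{n/N} − 1] with step sizes h_n = x_n − x_{n−1}, the sequence h_1, h_2, …, h_N is strictly increasing, and the largest step satisfies h_N ≤ (1 + ε) (1/N) ln(1 + 1/ε); in particular, for ε ∈ (0,1], h_N ≤ (2/N) ln(1 + 1/ε). -/
open Set

/-! Writing `a = 1 + 1/ε`, the function `t ↦ ε * (a ^ t - 1)` is strictly convex, so its increments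
over steps of the fixed length `1/N` increase. By convexity the last increment is at most `1/N`
times the slope at `t = 1`, which is `ε * a * log a = (1 + ε) * log a`. -/

theorem strictMono_rpow_add_sub_rpow {a δ : ℝ} (ha : 1 < a) (hδ : 0 < δ) :
    StrictMono fun t : ℝ ↦ a ^ (t + δ) - a ^ t := by
  have ha₀ : 0 < a := zero_lt_one.trans ha
  have factor (t : ℝ) : a ^ (t + δ) - a ^ t = a ^ t * (a ^ δ - 1) := by
    rw [Real.rpow_add ha₀, mul_sub_one]
  have growth : 0 < a ^ δ - 1 := sub_pos.mpr (Real.one_lt_rpow ha hδ)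
  intro s t hst
  simp only [factor]
  exact mul_lt_mul_of_pos_right (Real.rpow_lt_rpow_of_exponent_lt ha hst) growth

theorem rpow_sub_rpow_le_mul_log {a : ℝ} (ha : 0 < a) (s t : ℝ) :
    a ^ t - a ^ s ≤ a ^ t * (t - s) * Real.log a := by
  have tangent : 1 + (s - t) * Real.log a ≤ a ^ (s - t) := by
    rw [Real.rpow_def_of_pos ha]
    linarith [Real.add_one_le_exp (Real.log a * (s - t))]
  have rpow_eq_mul : a ^ s = a ^ t * a ^ (s - t) := by
    rw [← Real.rpow_add ha, add_sub_cancel]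
  calc a ^ t - a ^ s = a ^ t * (1 - a ^ (s - t)) := by rw [rpow_eq_mul, mul_one_sub]
    _ ≤ a ^ t * ((t - s) * Real.log a) := by
      gcongr
      linarith
    _ = a ^ t * (t - s) * Real.log a := (mul_assoc _ _ _).symm

/-- The mesh obtained by sampling `t ↦ c * (a ^ t - 1)` at `t = n / N`; it runs from `0` at `n = 0`
to `c * (a - 1)` at `n = N`. The index `n` is not restricted to `n ≤ N`. -/
noncomputable def exponentialMesh (c a : ℝ) (N n : ℕ) : ℝ :=
  c * (a ^ ((n : ℝ) / N) - 1)

namespace exponentialMesh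

theorem succ_sub (c a : ℝ) (N n : ℕ) :
    exponentialMesh c a N (n + 1) - exponentialMesh c a N n =
      c * (a ^ ((n : ℝ) / N + 1 / N) - a ^ ((n : ℝ) / N)) := by
  simp only [exponentialMesh, Nat.cast_add_one, add_div]
  ring

theorem strictMono_succ_sub {c a : ℝ} (hc : 0 < c) (ha : 1 < a) {N : ℕ} (hN : 0 < N) :
    StrictMono fun n ↦ exponentialMesh c a N (n + 1) - exponentialMesh c a N n := by
  have hN' : (0 : ℝ) < N := Nat.cast_pos.mpr hN
  intro m n hmn
  simp only [succ_sub]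
  refine mul_lt_mul_of_pos_left (strictMono_rpow_add_sub_rpow ha (one_div_pos.mpr hN') ?_) hc
  gcongr

theorem succ_sub_le {c a : ℝ} (hc : 0 ≤ c) (ha : 0 < a) (N n : ℕ) :
    exponentialMesh c a N (n + 1) - exponentialMesh c a N n ≤
      c * a ^ (((n + 1 : ℕ) : ℝ) / N) * (1 / N) * Real.log a := by
  rw [succ_sub, Nat.cast_add_one, add_div]
  have increment_le := rpow_sub_rpow_le_mul_log ha ((n : ℝ) / N) ((n : ℝ) / N + 1 / N)
  rw [add_sub_cancel_left] at increment_le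
  simpa only [mul_assoc] using mul_le_mul_of_nonneg_left increment_le hc

theorem last_sub_le {c a : ℝ} (hc : 0 ≤ c) (ha : 0 < a) {N : ℕ} (hN : 0 < N) :
    exponentialMesh c a N N - exponentialMesh c a N (N - 1) ≤ c * a * (1 / N) * Real.log a := by
  have last_step_le := succ_sub_le hc ha N (N - 1)
  rwa [Nat.sub_add_cancel hN, div_self (Nat.cast_ne_zero.mpr hN.ne'), Real.rpow_one]
    at last_step_le

end exponentialMesh

/-- For the mesh `x_n = ε ((1 + 1/ε)^{n/N} - 1)` with steps `h_n = x_n - x_{n-1}`,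
the steps are strictly increasing and the largest step satisfies
`h_N ≤ (1 + ε) (1/N) ln (1 + 1/ε)`; in particular for `ε ≤ 1`,
`h_N ≤ (2/N) ln (1 + 1/ε)`. -/
theorem statement14 (ε : ℝ) (hε : 0 < ε) (N : ℕ) (hN : 1 ≤ N) :
    ∀ x h : ℕ → ℝ,
      (∀ n : ℕ, x n = ε * ((1 + 1 / ε) ^ ((n : ℝ) / (N : ℝ)) - 1)) →
      (∀ n : ℕ, 1 ≤ n → h n = x n - x (n - 1)) →
      (∀ n : ℕ, 1 ≤ n → n < N → h n < h (n + 1)) ∧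
      h N ≤ (1 + ε) * (1 / N) * Real.log (1 + 1 / ε) ∧
      (ε ≤ 1 → h N ≤ (2 / N) * Real.log (1 + 1 / ε)) := by
  intro x h hx hh
  obtain rfl : x = exponentialMesh ε (1 + 1 / ε) N := funext hx
  have one_lt_base : 1 < 1 + 1 / ε := lt_add_of_pos_right 1 (one_div_pos.mpr hε)
  have last_step_le : h N ≤ (1 + ε) * (1 / N) * Real.log (1 + 1 / ε) := by
    have slope_at_one : ε * (1 + 1 / ε) = 1 + ε := by
      rw [mul_one_add, mul_one_div_cancel hε.ne', add_comm]
    rw [hh N hN, ← slope_at_one]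
    exact exponentialMesh.last_sub_le hε.le (zero_lt_one.trans one_lt_base) hN
  refine ⟨fun n hn _ ↦ ?_, last_step_le, fun hε_le ↦ last_step_le.trans ?_⟩
  · have steps_lt := exponentialMesh.strictMono_succ_sub hε one_lt_base hN
      (Nat.sub_one_lt_of_le hn le_rfl)
    simpa only [hh n hn, hh (n + 1) n.succ_pos, Nat.sub_add_cancel hn, Nat.add_sub_cancel]
      using steps_lt
  · have log_nonneg : 0 ≤ Real.log (1 + 1 / ε) := Real.log_nonneg one_lt_base.le
    rw [mul_one_div]
    gcongr
    linarith
end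

section
/- Let v : [0,1] → ℝ be differentiable with |v'(x)| ≤ C₂/(ε + x) for all x ∈ [0,1], and suppose f : [0,1] × ℝ → ℝ is continuously differentiable with |∂f/∂x| ≤ C and |∂f/∂u| ≤ C₁ on the relevant bounded region. Then for any 0 ≤ x_{n−1} ≤ x ≤ x_n ≤ 1, |f(x, v(x)) − f(x_{n−1}, v(x_{n−1}))| ≤ C (x_n − x_{n−1}) + C₁ C₂ ln((ε + x_n)/(ε + x_{n−1})). -/
open Set

/-!
Going from `(a, v a)` to `(x, v x)` through `(x, v a)`, the mean value inequality in each variable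
bounds the increment of `f` by `C * (x - a) + C₁ * ‖v x - v a‖`. Since `C₂ / (ε + t)` is the
derivative of `C₂ * log (ε + t)`, integrating the bound on `v'` yields the logarithm.
-/

theorem norm_sub_le_of_norm_partial_hasFDerivWithin_le {𝕜 X Y G : Type*} [RCLike 𝕜]
    [NormedAddCommGroup X] [NormedSpace ℝ X] [NormedSpace 𝕜 X]
    [NormedAddCommGroup Y] [NormedSpace ℝ Y] [NormedSpace 𝕜 Y]
    [NormedAddCommGroup G] [NormedSpace 𝕜 G]
    {f : X → Y → G} {fx : X → Y → X →L[𝕜] G} {fy : X → Y → Y →L[𝕜] G}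
    {S : Set X} {T : Set Y} {C₁ C₂ : ℝ} (hS : Convex ℝ S) (hT : Convex ℝ T)
    (hfx : ∀ x ∈ S, ∀ y ∈ T, HasFDerivWithinAt (fun s => f s y) (fx x y) S x)
    (hfx_le : ∀ x ∈ S, ∀ y ∈ T, ‖fx x y‖ ≤ C₁)
    (hfy : ∀ x ∈ S, ∀ y ∈ T, HasFDerivWithinAt (f x) (fy x y) T y)
    (hfy_le : ∀ x ∈ S, ∀ y ∈ T, ‖fy x y‖ ≤ C₂)
    {x₁ x₂ : X} {y₁ y₂ : Y} (hx₁ : x₁ ∈ S) (hx₂ : x₂ ∈ S) (hy₁ : y₁ ∈ T) (hy₂ : y₂ ∈ T) :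
    ‖f x₂ y₂ - f x₁ y₁‖ ≤ C₁ * ‖x₂ - x₁‖ + C₂ * ‖y₂ - y₁‖ := by
  have move_x : ‖f x₂ y₁ - f x₁ y₁‖ ≤ C₁ * ‖x₂ - x₁‖ :=
    hS.norm_image_sub_le_of_norm_hasFDerivWithin_le (f := fun s => f s y₁)
      (fun x hx => hfx x hx y₁ hy₁) (fun x hx => hfx_le x hx y₁ hy₁) hx₁ hx₂
  have move_y : ‖f x₂ y₂ - f x₂ y₁‖ ≤ C₂ * ‖y₂ - y₁‖ :=
    hT.norm_image_sub_le_of_norm_hasFDerivWithin_le (hfy x₂ hx₂) (hfy_le x₂ hx₂) hy₁ hy₂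
  linarith [norm_sub_le_norm_sub_add_norm_sub (f x₂ y₂) (f x₂ y₁) (f x₁ y₁)]

theorem hasDerivAt_mul_log_add_div {ε c t : ℝ} (K : ℝ) (hc : c ≠ 0) (ht : ε + t ≠ 0) :
    HasDerivAt (fun s => K * Real.log ((ε + s) / c)) (K / (ε + t)) t := by
  have hdiv : HasDerivAt (fun s => (ε + s) / c) (1 / c) t :=
    ((hasDerivAt_id t).const_add ε).div_const c
  exact ((hdiv.log (div_ne_zero ht hc)).const_mul K).congr_deriv (by field_simp)

section

variable {E F : Type*} [NormedAddCommGroup E] [NormedSpace ℝ E]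
  [NormedAddCommGroup F] [NormedSpace ℝ F]

theorem norm_sub_le_mul_log_of_norm_deriv_right_le_div {v v' : ℝ → E} {ε K a b : ℝ}
    (ha : 0 < ε + a) (hv : ContinuousOn v (Icc a b))
    (hv' : ∀ t ∈ Ico a b, HasDerivWithinAt v (v' t) (Ici t) t)
    (hv'_le : ∀ t ∈ Ico a b, ‖v' t‖ ≤ K / (ε + t)) :
    ∀ x ∈ Icc a b, ‖v x - v a‖ ≤ K * Real.log ((ε + x) / (ε + a)) := by
  have hlog : ∀ t ∈ Icc a b,
      HasDerivAt (fun s => K * Real.log ((ε + s) / (ε + a))) (K / (ε + t)) t :=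
    fun t ht => hasDerivAt_mul_log_add_div K ha.ne' (by linarith [ht.1])
  exact image_norm_le_of_norm_deriv_right_le_deriv_boundary' (f := fun t => v t - v a)
    (hv.sub continuousOn_const)
    (fun t ht => (hv' t ht).sub_const (v a))
    (by simp [ha.ne'])
    (HasDerivAt.continuousOn hlog)
    (fun t ht => (hlog t (Ico_subset_Icc_self ht)).hasDerivWithinAt)
    hv'_le

theorem statement15_general {f fx : ℝ → E → F} {fu : ℝ → E → E →L[ℝ] F} {v v' : ℝ → E}
    {U : Set E} {ε C C₁ C₂ a x b : ℝ} (ha : 0 < ε + a) (hx : x ∈ Icc a b)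
    (hU : Convex ℝ U) (hvU : MapsTo v (Icc a b) U)
    (hfx : ∀ t ∈ Icc a b, ∀ u ∈ U, HasDerivWithinAt (fun s => f s u) (fx t u) (Icc a b) t)
    (hfx_le : ∀ t ∈ Icc a b, ∀ u ∈ U, ‖fx t u‖ ≤ C)
    (hfu : ∀ t ∈ Icc a b, ∀ u ∈ U, HasFDerivWithinAt (f t) (fu t u) U u)
    (hfu_le : ∀ t ∈ Icc a b, ∀ u ∈ U, ‖fu t u‖ ≤ C₁)
    (hv : ∀ t ∈ Icc a b, HasDerivWithinAt v (v' t) (Icc a b) t)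
    (hv_le : ∀ t ∈ Icc a b, ‖v' t‖ ≤ C₂ / (ε + t)) :
    ‖f x (v x) - f a (v a)‖ ≤ C * (b - a) + C₁ * C₂ * Real.log ((ε + b) / (ε + a)) := by
  have ha_mem : a ∈ Icc a b := left_mem_Icc.2 (hx.1.trans hx.2)
  have hC : 0 ≤ C := (norm_nonneg _).trans (hfx_le a ha_mem _ (hvU ha_mem))
  have hC₁ : 0 ≤ C₁ := (norm_nonneg _).trans (hfu_le a ha_mem _ (hvU ha_mem))
  have hC₂ : 0 ≤ C₂ := by
    simpa [div_mul_cancel₀ _ ha.ne'] using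
      mul_nonneg ((norm_nonneg _).trans (hv_le a ha_mem)) ha.le
  have hv_sub : ‖v x - v a‖ ≤ C₂ * Real.log ((ε + x) / (ε + a)) :=
    norm_sub_le_mul_log_of_norm_deriv_right_le_div ha
      (HasDerivWithinAt.continuousOn hv)
      (fun t ht => (hv t (Ico_subset_Icc_self ht)).mono_of_mem_nhdsWithin
        (Icc_mem_nhdsGE_of_mem ht))
      (fun t ht => hv_le t (Ico_subset_Icc_self ht)) x hx
  have hlog : Real.log ((ε + x) / (ε + a)) ≤ Real.log ((ε + b) / (ε + a)) :=
    Real.log_le_log (div_pos (by linarith [hx.1]) ha) (by gcongr; exact hx.2)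
  calc ‖f x (v x) - f a (v a)‖
      ≤ C * ‖x - a‖ + C₁ * ‖v x - v a‖ :=
        norm_sub_le_of_norm_partial_hasFDerivWithin_le (convex_Icc a b) hU
          (fun t ht u hu => (hfx t ht u hu).hasFDerivWithinAt)
          (fun t ht u hu => by simpa using hfx_le t ht u hu)
          hfu hfu_le ha_mem hx (hvU ha_mem) (hvU hx)
    _ ≤ C * (b - a) + C₁ * (C₂ * Real.log ((ε + b) / (ε + a))) := by
        rw [Real.norm_of_nonneg (sub_nonneg.2 hx.1)]
        gcongr
        · exact hx.2
        · exact hv_sub.trans (by gcongr)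
    _ = C * (b - a) + C₁ * C₂ * Real.log ((ε + b) / (ε + a)) := by rw [mul_assoc]

end

/-- Estimate of the frozen-coefficient error: if `|v' x| ≤ C₂/(ε + x)`,
`|∂f/∂x| ≤ C` and `|∂f/∂u| ≤ C₁`, then for `0 ≤ x_{n-1} ≤ x ≤ x_n ≤ 1`,
`|f (x, v x) - f (x_{n-1}, v x_{n-1})| ≤ C (x_n - x_{n-1}) + C₁ C₂ ln ((ε + x_n)/(ε + x_{n-1}))`. -/
theorem statement15 (ε C C₁ C₂ : ℝ) (hε : ε ∈ Ioc (0 : ℝ) 1)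
    (f : ℝ → ℝ → ℝ)
    (hf : ContDiff ℝ 1 (Function.uncurry f))
    (hfx : ∀ x ∈ Icc (0 : ℝ) 1, ∀ s : ℝ, |deriv (fun t => f t s) x| ≤ C)
    (hfu : ∀ x ∈ Icc (0 : ℝ) 1, ∀ s : ℝ, |deriv (fun t => f x t) s| ≤ C₁)
    (v : ℝ → ℝ)
    (hv : ∀ x ∈ Icc (0 : ℝ) 1, DifferentiableAt ℝ v x)
    (hv' : ∀ x ∈ Icc (0 : ℝ) 1, |deriv v x| ≤ C₂ / (ε + x)) :
    ∀ xnm x xn : ℝ, 0 ≤ xnm → xnm ≤ x → x ≤ xn → xn ≤ 1 →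
      |f x (v x) - f xnm (v xnm)| ≤
        C * (xn - xnm) + C₁ * C₂ * Real.log ((ε + xn) / (ε + xnm)) := by
  intro xnm x xn h0 hnx hxn h1
  have hsub : Icc xnm xn ⊆ Icc 0 1 := Icc_subset_Icc h0 h1
  have hf_diff : Differentiable ℝ (Function.uncurry f) := hf.differentiable one_ne_zero
  have hfx_diff (s : ℝ) : Differentiable ℝ fun t => f t s :=
    hf_diff.comp (differentiable_id.prodMk (differentiable_const s))
  have hfu_diff (t : ℝ) : Differentiable ℝ (f t) :=
    hf_diff.comp ((differentiable_const t).prodMk differentiable_id)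
  exact statement15_general (by linarith [hε.1]) ⟨hnx, hxn⟩ convex_univ (mapsTo_univ v _)
    (fun t _ s _ => (hfx_diff s t).hasDerivAt.hasDerivWithinAt)
    (fun t ht s _ => hfx t (hsub ht) s)
    (fun t _ s _ => (hfu_diff t s).hasFDerivAt.hasFDerivWithinAt)
    (fun t ht s _ => norm_deriv_eq_norm_fderiv.symm.trans_le (hfu t (hsub ht) s))
    (fun t ht => (hv t (hsub ht)).hasDerivAt.hasDerivWithinAt)
    (fun t ht => hv' t (hsub ht))
end
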